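/- arXiv:1705.04426 — 4 statements merged into one kernel-verified Lean document; each statement's English description precedes it below -/
import Mathlib

section
/- Let p > n ≥ 2 with n an integer and p real, let A, φ, φ⁻¹ be as in the context, let a > 0, and let v_a(r) = ∫₀^r φ⁻¹(a·τ^{-(n-1)}) dτ. Then the radially symmetric function u(x) = v_a(|x|) on ℝⁿ is continuous on ℝⁿ, continuously differentiable on ℝⁿ\{0}, and is a weak solution of div(|∇u|^{p-2}A(|∇u|)∇u) = 0 in ℝⁿ\{0}: for every smooth function ψ : ℝⁿ → ℝ with compact support contained in ℝⁿ\{0}, ∫ |∇u(x)|^{p-2} A(|∇u(x)|) ⟨∇u(x), ∇ψ(x)⟩ dx = 0. -/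
/-!
Write `g τ = φ⁻¹(a / τ^(n-1))`. The inverse of a strictly increasing surjection is continuous, so
`g` is continuous and positive on `(0,∞)`. The lower bound `δ t^(p-1) ≤ φ t` gives
`g τ ≤ C τ^(-(n-1)/(p-1))`, which is integrable at `0` because `p > n`. Hence `v` is continuous on
`[0,∞)` with `v' = g` on `(0,∞)`, and `∇u(x) = (g(‖x‖)/‖x‖) x` for `x ≠ 0`
(`hasGradientAt_comp_norm`). Since `φ(g r) = a / r^(n-1)`, the flux `|∇u|^(p-2) A(|∇u|) ∇u` is the
multiple `a x / ‖x‖^n` of the gradient of the fundamental solution of the Laplacian.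

It remains to see that `∫ ‖x‖⁻ⁿ Dψ(x)x dx = 0` (`integral_radial_eq_zero`). By the substitution
`y = s x`, the integral `∫ ‖x‖⁻ⁿ ψ(s x) dx` does not depend on `s > 0`: the measure `‖x‖⁻ⁿ dx` is
invariant under dilations. Its derivative at `s = 1` is the integral in question.
-/

open Real MeasureTheory Set
open scoped RealInnerProductSpace

/-- The field `x / ‖x‖ⁿ` is weakly divergence free away from the origin. -/
lemma integral_radial_eq_zero (n : ℕ) (ψ : EuclideanSpace ℝ (Fin n) → ℝ)
    (hψ : ContDiff ℝ (⊤ : ℕ∞) ψ) (hc : HasCompactSupport ψ)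
    (hs : tsupport ψ ⊆ ({0}ᶜ : Set (EuclideanSpace ℝ (Fin n)))) :
    ∫ x, (‖x‖ ^ n)⁻¹ * fderiv ℝ ψ x x = 0 := by
  have hcont := hψ.continuous
  have hd : Differentiable ℝ ψ := hψ.differentiable (by simp)
  have hcd : Continuous (fderiv ℝ ψ) := hψ.continuous_fderiv (by simp)
  -- the support lies in an annulus `ρ ≤ ‖x‖ ≤ R`
  obtain ⟨ρ, hρ, hρs⟩ : ∃ ρ > 0, ∀ x ∈ tsupport ψ, ρ ≤ ‖x‖ := by
    have h0 : (tsupport ψ)ᶜ ∈ nhds (0 : EuclideanSpace ℝ (Fin n)) :=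
      (isClosed_tsupport ψ).isOpen_compl.mem_nhds (fun h => hs h rfl)
    obtain ⟨ρ, hρ, hb⟩ := Metric.mem_nhds_iff.1 h0
    refine ⟨ρ, hρ, fun x hx => ?_⟩
    by_contra! hlt
    exact hb (by simpa using hlt) hx
  obtain ⟨R, hR, hRs⟩ : ∃ R > 0, ∀ x ∈ tsupport ψ, ‖x‖ ≤ R := by
    obtain ⟨R, hR⟩ := hc.isCompact.isBounded.exists_norm_le
    exact ⟨max R 1, by positivity, fun x hx => (hR x hx).trans (le_max_left _ _)⟩
  obtain ⟨M₀, hM₀⟩ := hcont.bounded_above_of_compact_support hc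
  obtain ⟨M₁, hM₁⟩ := hcd.bounded_above_of_compact_support (hc.fderiv (𝕜 := ℝ))
  have hM₀' : 0 ≤ M₀ := (norm_nonneg _).trans (hM₀ 0)
  have hM₁' : 0 ≤ M₁ := (norm_nonneg _).trans (hM₁ 0)
  have hW : Measurable fun x : EuclideanSpace ℝ (Fin n) => (‖x‖ ^ n)⁻¹ := by fun_prop
  have hWle : ∀ x : EuclideanSpace ℝ (Fin n), ρ / 2 ≤ ‖x‖ → (‖x‖ ^ n)⁻¹ ≤ ((ρ / 2) ^ n)⁻¹ := by
    intro x hx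
    gcongr
  have hK : volume (Metric.closedBall (0 : EuclideanSpace ℝ (Fin n)) (2 * R)) ≠ ⊤ :=
    measure_closedBall_lt_top.ne
  have hbint : ∀ C : ℝ, Integrable
      ((Metric.closedBall (0 : EuclideanSpace ℝ (Fin n)) (2 * R)).indicator fun _ => C) :=
    fun C => (integrable_indicator_iff Metric.isClosed_closedBall.measurableSet).2
      (integrableOn_const hK)
  -- a common integrable majorant for `ψ (s • x)` and its `s`-derivative: for `s ∈ (1/2, 3/2)`
  -- the support of `x ↦ ψ (s • x)` stays in the annulus `ρ / 2 ≤ ‖x‖ ≤ 2 * R`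
  have key : ∀ (C : ℝ) (s : ℝ) (x : EuclideanSpace ℝ (Fin n)) (y : ℝ), 0 ≤ C →
      s ∈ Metric.ball (1 : ℝ) (1 / 2) → (s • x ∉ tsupport ψ → y = 0) →
      (‖x‖ ≤ 2 * R → ‖y‖ ≤ C) →
      ‖(‖x‖ ^ n)⁻¹ * y‖ ≤ (Metric.closedBall (0 : EuclideanSpace ℝ (Fin n)) (2 * R)).indicator
        (fun _ => ((ρ / 2) ^ n)⁻¹ * C) x := by
    intro C s x y hC hsb hy0 hyC
    rw [Real.ball_eq_Ioo] at hsb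
    by_cases hx : s • x ∈ tsupport ψ
    · have h1 := hρs _ hx
      have h2 := hRs _ hx
      rw [norm_smul, Real.norm_of_nonneg (by linarith [hsb.1])] at h1 h2
      have h3 : ‖x‖ ≤ 2 * R := by nlinarith [hsb.1, hsb.2, norm_nonneg x]
      have h4 : ρ / 2 ≤ ‖x‖ := by nlinarith [hsb.1, hsb.2, norm_nonneg x]
      rw [indicator_of_mem (by simpa using h3), norm_mul, Real.norm_of_nonneg (by positivity)]
      exact mul_le_mul (hWle x h4) (hyC h3) (norm_nonneg _) (by positivity)
    · rw [hy0 hx, mul_zero, norm_zero]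
      exact indicator_nonneg (fun _ _ => by positivity) x
  have hmem1 : (1 : ℝ) ∈ Metric.ball (1 : ℝ) (1 / 2) := Metric.mem_ball_self (by norm_num)
  have hder := (hasDerivAt_integral_of_dominated_loc_of_deriv_le (μ := volume)
    (F := fun (s : ℝ) (x : EuclideanSpace ℝ (Fin n)) => (‖x‖ ^ n)⁻¹ * ψ (s • x))
    (F' := fun (s : ℝ) (x : EuclideanSpace ℝ (Fin n)) => (‖x‖ ^ n)⁻¹ * fderiv ℝ ψ (s • x) x)
    (x₀ := 1) (s := Metric.ball (1 : ℝ) (1 / 2))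
    (bound := (Metric.closedBall (0 : EuclideanSpace ℝ (Fin n)) (2 * R)).indicator
        (fun _ => ((ρ / 2) ^ n)⁻¹ * (M₁ * (2 * R))))
    (Metric.ball_mem_nhds _ (by norm_num))
    (Filter.Eventually.of_forall fun s =>
      (hW.mul (by fun_prop : Continuous fun x : EuclideanSpace ℝ (Fin n) =>
        ψ (s • x)).measurable).aestronglyMeasurable)
    ?_ ?_ ?_ (hbint _) ?_).2
  · have hconst : (fun s : ℝ => ∫ x : EuclideanSpace ℝ (Fin n), (‖x‖ ^ n)⁻¹ * ψ (s • x))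
        =ᶠ[nhds 1] fun _ => ∫ x : EuclideanSpace ℝ (Fin n), (‖x‖ ^ n)⁻¹ * ψ x := by
      filter_upwards [lt_mem_nhds (zero_lt_one' ℝ)] with s hs0
      have h := Measure.integral_comp_smul (volume : Measure (EuclideanSpace ℝ (Fin n)))
        (fun x => (‖x‖ ^ n)⁻¹ * ψ x) s
      have hsn : (0 : ℝ) < s ^ n := by positivity
      simp only [norm_smul, finrank_euclideanSpace, Fintype.card_fin, smul_eq_mul,
        Real.norm_of_nonneg hs0.le, mul_pow, mul_inv, mul_assoc, abs_inv, abs_of_pos hsn] at h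
      rw [integral_const_mul] at h
      exact mul_left_cancel₀ (inv_ne_zero hsn.ne') h
    have h := (hder.congr_of_eventuallyEq hconst.symm).unique (hasDerivAt_const _ _)
    simpa using h
  · refine (hbint (((ρ / 2) ^ n)⁻¹ * M₀)).mono'
      (hW.mul (by fun_prop : Continuous fun x : EuclideanSpace ℝ (Fin n) =>
        ψ ((1 : ℝ) • x)).measurable).aestronglyMeasurable
      (Filter.Eventually.of_forall fun x => key M₀ 1 x _ hM₀' hmem1
        (fun h => image_eq_zero_of_notMem_tsupport h) (fun _ => hM₀ _))
  · exact (hW.mul (by fun_prop : Continuous fun x : EuclideanSpace ℝ (Fin n) =>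
        fderiv ℝ ψ ((1 : ℝ) • x) x).measurable).aestronglyMeasurable
  · refine Filter.Eventually.of_forall fun x s hsb => key _ s x _ (by positivity) hsb
      (fun h => ?_) (fun hx => ?_)
    · have h' : s • x ∉ tsupport (fderiv ℝ ψ) := fun h' => h (tsupport_fderiv_subset ℝ h')
      rw [image_eq_zero_of_notMem_tsupport h']
      rfl
    · exact (ContinuousLinearMap.le_opNorm _ _).trans
        (mul_le_mul (hM₁ _) hx (norm_nonneg _) hM₁')
  · refine Filter.Eventually.of_forall fun x s _ => ?_
    have h1 : HasDerivAt (fun s : ℝ => s • x) x s := by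
      simpa using (hasDerivAt_id s).smul_const x
    exact ((hd (s • x)).hasFDerivAt.comp_hasDerivAt s h1).const_mul _

lemma hasGradientAt_comp_norm {n : ℕ} {v : ℝ → ℝ} {c : ℝ} {x : EuclideanSpace ℝ (Fin n)}
    (hx : x ≠ 0) (hv : HasDerivAt v c ‖x‖) :
    HasGradientAt (fun y => v ‖y‖) ((c / ‖x‖) • x) x := by
  have hx' : ‖x‖ ≠ 0 := norm_ne_zero_iff.2 hx
  have h1 : HasFDerivAt (fun y : EuclideanSpace ℝ (Fin n) => ‖y‖)
      ((‖x‖)⁻¹ • innerSL ℝ x) x := by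
    have h := (hasStrictFDerivAt_norm_sq x).hasFDerivAt.sqrt (by positivity)
    simp only [Real.sqrt_sq (norm_nonneg _)] at h
    convert! h using 1
    ext y
    simp
    field_simp
  rw [hasGradientAt_iff_hasFDerivAt]
  convert! hv.comp_hasFDerivAt x h1 using 1
  ext y
  simp [div_eq_mul_inv, mul_assoc]

/-- the radial function `u(x) = v_a(|x|)` is continuous on `ℝⁿ`,
`C¹` on `ℝⁿ \ {0}`, and a weak solution of
`div(|∇u|^{p-2} A(|∇u|) ∇u) = 0` in `ℝⁿ \ {0}`. -/
theorem stmt_4 (n : ℕ) (hn : 2 ≤ n) (p : ℝ) (hp : (n : ℝ) < p)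
    (A : ℝ → ℝ) (hA_cont : ContinuousOn A (Ici 0)) (hA0 : 0 < A 0)
    (φ : ℝ → ℝ) (hφ : ∀ t, φ t = t ^ (p - 1) * A t)
    (hφ_mono : StrictMonoOn φ (Ioi 0))
    (L δ : ℝ) (hδ : 0 < δ) (hδL : δ ≤ L)
    (hA_bound : ∀ t ≥ (0 : ℝ), δ ≤ A t ∧ A t ≤ L)
    (φinv : ℝ → ℝ)
    (hφinv_left : ∀ t ≥ (0 : ℝ), φinv (φ t) = t)
    (hφinv_right : ∀ s ≥ (0 : ℝ), φ (φinv s) = s)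
    (hφinv_nonneg : ∀ s ≥ (0 : ℝ), 0 ≤ φinv s)
    (a : ℝ) (ha : 0 < a)
    (v : ℝ → ℝ) (hv : ∀ r, v r = ∫ τ in Ioc (0 : ℝ) r, φinv (a / τ ^ (n - 1)))
    (u : EuclideanSpace ℝ (Fin n) → ℝ) (hu : ∀ x, u x = v ‖x‖) :
    Continuous u ∧
    ContDiffOn ℝ 1 u ({0}ᶜ : Set (EuclideanSpace ℝ (Fin n))) ∧
    (∀ ψ : EuclideanSpace ℝ (Fin n) → ℝ, ContDiff ℝ (⊤ : ℕ∞) ψ → HasCompactSupport ψ →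
      tsupport ψ ⊆ ({0}ᶜ : Set (EuclideanSpace ℝ (Fin n))) →
      ∫ x in ({0}ᶜ : Set (EuclideanSpace ℝ (Fin n))),
        ‖gradient u x‖ ^ (p - 2) * A ‖gradient u x‖ *
          ⟪gradient u x, gradient ψ x⟫ = 0) := by

  have hp1 : (1 : ℝ) < p := by
    have : (2 : ℝ) ≤ n := by exact_mod_cast hn
    linarith
  have hφ0 : φ 0 = 0 := by rw [hφ, Real.zero_rpow (by linarith), zero_mul]
  have hφpos : ∀ t > 0, 0 < φ t := fun t ht => by
    rw [hφ]
    exact mul_pos (Real.rpow_pos_of_pos ht _) (hδ.trans_le (hA_bound t ht.le).1)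
  have hinv_pos : ∀ s > 0, 0 < φinv s := fun s hs => by
    refine (hφinv_nonneg s hs.le).lt_of_ne fun h => ?_
    have := hφinv_right s hs.le
    rw [← h, hφ0] at this
    exact hs.ne this
  have hinv_mono : StrictMonoOn φinv (Ioi 0) := by
    intro s hs s' hs' hss
    by_contra! hle
    have := hφ_mono.monotoneOn (hinv_pos s' hs') (hinv_pos s hs) hle
    rw [hφinv_right s' (le_of_lt hs'), hφinv_right s (le_of_lt hs)] at this
    exact absurd hss this.not_gt
  have hinv_cont : ∀ s > 0, ContinuousAt φinv s := fun s hs => by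
    refine hinv_mono.continuousAt_of_image_mem_nhds (Ioi_mem_nhds hs)
      (Filter.mem_of_superset (Ioi_mem_nhds (hinv_pos s hs)) fun t ht => ?_)
    exact ⟨φ t, hφpos t ht, hφinv_left t (le_of_lt ht)⟩
  set g : ℝ → ℝ := fun τ => φinv (a / τ ^ (n - 1)) with hg
  have hgpos : ∀ τ > 0, 0 < g τ := fun τ hτ => hinv_pos _ (by positivity)
  have hgcont : ∀ τ > 0, ContinuousAt g τ := fun τ hτ => by
    have h1 : ContinuousAt (fun τ : ℝ => a / τ ^ (n - 1)) τ :=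
      continuousAt_const.div (by fun_prop) (by positivity)
    exact ContinuousAt.comp (f := fun τ : ℝ => a / τ ^ (n - 1)) (g := φinv)
      (hinv_cont _ (by positivity)) h1
  have hgcontOn : ContinuousOn g (Ioi 0) := fun τ hτ => (hgcont τ hτ).continuousWithinAt
  have hφg : ∀ τ > 0, φ (g τ) = a / τ ^ (n - 1) := fun τ hτ => hφinv_right _ (by positivity)
  -- from `δ * (g τ) ^ (p - 1) ≤ φ (g τ) = a / τ ^ (n - 1)`
  have hgle : ∀ τ > 0, g τ ≤ (a / δ) ^ (p - 1)⁻¹ * τ ^ (-((n - 1 : ℝ) / (p - 1))) := by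
    intro τ hτ
    have h1 : g τ ^ (p - 1) ≤ a / δ * τ ^ (-(n - 1 : ℝ)) := by
      have h2 := hφg τ hτ
      rw [hφ] at h2
      have h3 : g τ ^ (p - 1) * δ ≤ a / τ ^ (n - 1) := by
        rw [← h2]
        exact mul_le_mul_of_nonneg_left (hA_bound _ (hgpos τ hτ).le).1
          (Real.rpow_nonneg (hgpos τ hτ).le _)
      have h4 : τ ^ (-(n - 1 : ℝ)) = (τ ^ (n - 1))⁻¹ := by
        rw [Real.rpow_neg hτ.le, ← Real.rpow_natCast, Nat.cast_sub (by omega), Nat.cast_one]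
      rw [h4, div_mul_eq_mul_div, le_div_iff₀ hδ]
      simpa [div_eq_mul_inv] using h3
    have h5 := Real.rpow_le_rpow (Real.rpow_nonneg (hgpos τ hτ).le _) h1
      (by rw [inv_nonneg]; linarith : 0 ≤ (p - 1)⁻¹)
    rwa [Real.rpow_rpow_inv (hgpos τ hτ).le (by linarith),
      Real.mul_rpow (by positivity) (by positivity), ← Real.rpow_mul hτ.le, neg_mul,
      ← div_eq_mul_inv] at h5
  -- this is where `n < p` enters: it makes `g` integrable at `0`
  have hexp : -1 < -((n - 1 : ℝ) / (p - 1)) := by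
    rw [neg_lt_neg_iff, div_lt_one (by linarith)]
    linarith
  have hgint : ∀ b ≥ 0, IntegrableOn g (Ioc 0 b) := by
    intro b hb
    have h1 := (intervalIntegral.intervalIntegrable_rpow' (a := 0) (b := b) hexp).const_mul
      ((a / δ) ^ (p - 1)⁻¹)
    rw [intervalIntegrable_iff_integrableOn_Ioc_of_le hb] at h1
    refine Integrable.mono' h1
      ((hgcontOn.mono Ioc_subset_Ioi_self).aestronglyMeasurable measurableSet_Ioc) ?_
    filter_upwards [ae_restrict_mem measurableSet_Ioc] with τ hτ
    rw [Real.norm_of_nonneg (hgpos τ hτ.1).le]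
    exact hgle τ hτ.1
  have hvcont : ContinuousOn v (Ici 0) := by
    intro r hr
    have h1 : IntegrableOn g (Icc 0 (r + 1)) := by
      rw [integrableOn_Icc_iff_integrableOn_Ioc]
      exact hgint _ (by linarith [mem_Ici.1 hr])
    have h2 := intervalIntegral.continuousOn_primitive h1 r ⟨hr, by linarith⟩
    rw [show v = fun r => ∫ τ in Ioc (0 : ℝ) r, g τ from funext hv]
    refine h2.mono_of_mem_nhdsWithin ?_
    exact Filter.mem_of_superset (inter_mem_nhdsWithin (Ici 0) (Iio_mem_nhds (lt_add_one r)))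
      fun y hy => ⟨hy.1, le_of_lt hy.2⟩
  have hvder : ∀ r > 0, HasDerivAt v (g r) r := by
    intro r hr
    have h1 := intervalIntegral.integral_hasDerivAt_right (a := 0) (b := r)
      ((intervalIntegrable_iff_integrableOn_Ioc_of_le hr.le).2 (hgint r hr.le))
      (hgcontOn.stronglyMeasurableAtFilter isOpen_Ioi r hr) (hgcont r hr)
    refine h1.congr_of_eventuallyEq ?_
    filter_upwards [lt_mem_nhds hr] with y hy
    rw [hv, intervalIntegral.integral_of_le hy.le]
  obtain rfl : u = fun x => v ‖x‖ := funext hu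
  refine ⟨hvcont.comp_continuous continuous_norm fun x => norm_nonneg x, ?_, ?_⟩
  · have hv1 : ContDiffOn ℝ 1 v (Ioi 0) := by
      rw [show (1 : WithTop ℕ∞) = 0 + 1 by norm_num,
        contDiffOn_succ_iff_deriv_of_isOpen isOpen_Ioi]
      refine ⟨fun r hr => (hvder r hr).differentiableAt.differentiableWithinAt, by simp, ?_⟩
      rw [contDiffOn_zero]
      exact hgcontOn.congr fun r hr => (hvder r hr).deriv
    exact hv1.comp (contDiffOn_id.norm ℝ fun x hx => hx) fun x hx => norm_pos_iff.2 hx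
  · intro ψ hψ hc hs
    have hcongr : ∀ x ∈ ({0}ᶜ : Set (EuclideanSpace ℝ (Fin n))),
        ‖gradient (fun x => v ‖x‖) x‖ ^ (p - 2) * A ‖gradient (fun x => v ‖x‖) x‖ *
          ⟪gradient (fun x => v ‖x‖) x, gradient ψ x⟫
          = a * ((‖x‖ ^ n)⁻¹ * fderiv ℝ ψ x x) := by
      intro x hx
      have hr : 0 < ‖x‖ := norm_pos_iff.2 hx
      have ht := hgpos _ hr
      rw [(hasGradientAt_comp_norm hx (hvder _ hr)).gradient, real_inner_smul_left,
        inner_gradient_right, conj_trivial, norm_smul, Real.norm_of_nonneg (by positivity),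
        div_mul_cancel₀ _ hr.ne']
      have h1 := hφg _ hr
      rw [hφ, show p - 1 = (p - 2) + 1 by ring, Real.rpow_add_one ht.ne'] at h1
      have h2 : ‖x‖ ^ n = ‖x‖ ^ (n - 1) * ‖x‖ := by
        rw [← pow_succ, Nat.sub_add_cancel (by omega)]
      calc g ‖x‖ ^ (p - 2) * A (g ‖x‖) * (g ‖x‖ / ‖x‖ * fderiv ℝ ψ x x)
          = (g ‖x‖ ^ (p - 2) * g ‖x‖ * A (g ‖x‖)) / ‖x‖ * fderiv ℝ ψ x x := by ring
        _ = a * ((‖x‖ ^ n)⁻¹ * fderiv ℝ ψ x x) := by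
            rw [h1, h2]
            field_simp
    rw [setIntegral_congr_fun (measurableSet_singleton 0).compl hcongr,
      setIntegral_eq_integral_of_forall_compl_eq_zero, integral_const_mul,
      integral_radial_eq_zero n ψ hψ hc hs, mul_zero]
    intro x hx
    obtain rfl : x = 0 := by simpa using hx
    simp
end

section
/- Let n ≥ 2 be an integer, set p = n, let A, φ, φ⁻¹ be as in the context, fix s > 0, and for a > 0 define v̄_a(r) = ∫_s^r φ⁻¹(a·τ^{-(n-1)}) dτ for r ≥ s. Then v̄_a(s) = 0; v̄_a is strictly increasing on [s,∞); v̄_a is unbounded (for every M > 0 there is r ≥ s with v̄_a(r) > M); and for each fixed r ≥ s, v̄_a(r) → 0 as a → 0⁺. -/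
/-!
Put `m = n - 1 ≥ 1`. The bounds `δ ≤ A ≤ L` give `δ t ^ m ≤ φ t ≤ L t ^ m`, so
`t = φ⁻¹(a / τ ^ m)` satisfies `a / L ≤ (t τ) ^ m ≤ a / δ`, that is
`(a / L) ^ (1 / m) / τ ≤ φ⁻¹(a / τ ^ m) ≤ (a / δ) ^ (1 / m) / τ`
(`div_le_inverse` and `inverse_le_div`). The integrand is thus comparable to `1 / τ`, which is the
special feature of `p = n`: the lower bound makes `v̄_a(r)` grow at least like
`(a / L) ^ (1 / m) log (r / s)`, and the upper bound forces it to `0` as `a → 0⁺`.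
Integrability holds because `φ⁻¹` is increasing, so the integrand is antitone in `τ`
(`antitoneOn_integrand`); strict monotonicity of `v̄_a` is positivity of the integrand.
-/

open Real MeasureTheory Set Filter Topology

lemma inverse_le_div {m : ℕ} (hm : m ≠ 0) {δ a t τ : ℝ} (hδ : 0 < δ) (ht : 0 ≤ t)
    (hτ : 0 < τ) (h : δ * t ^ m ≤ a / τ ^ m) : t ≤ (a / δ) ^ ((m : ℝ)⁻¹) / τ := by
  have hp : (t * τ) ^ m ≤ a / δ := by
    rw [le_div_iff₀ (pow_pos hτ m)] at h
    rw [le_div_iff₀ hδ, mul_pow]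
    linarith
  have h0 : 0 ≤ t * τ := by positivity
  rw [le_div_iff₀ hτ, ← Real.pow_rpow_inv_natCast h0 hm]
  exact Real.rpow_le_rpow (by positivity) hp (by positivity)

lemma div_le_inverse {m : ℕ} (hm : m ≠ 0) {L a t τ : ℝ} (hL : 0 < L) (ha : 0 ≤ a) (ht : 0 ≤ t)
    (hτ : 0 < τ) (h : a / τ ^ m ≤ L * t ^ m) : (a / L) ^ ((m : ℝ)⁻¹) / τ ≤ t := by
  have hp : a / L ≤ (t * τ) ^ m := by
    rw [div_le_iff₀ (pow_pos hτ m)] at h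
    rw [div_le_iff₀ hL, mul_pow]
    linarith
  have h0 : 0 ≤ t * τ := by positivity
  rw [div_le_iff₀ hτ, ← Real.pow_rpow_inv_natCast h0 hm]
  exact Real.rpow_le_rpow (by positivity) hp (by positivity)

/-- A positive right inverse of a function that is strictly increasing on `(0, ∞)` is itself
monotone there, so composing it with the decreasing map `τ ↦ a / τ ^ m` gives an antitone
function. -/
lemma antitoneOn_integrand {φ φinv : ℝ → ℝ} (hφ : StrictMonoOn φ (Ioi 0))
    (hright : ∀ y > (0 : ℝ), φ (φinv y) = y) (hpos : ∀ y > (0 : ℝ), 0 < φinv y)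
    (m : ℕ) {a : ℝ} (ha : 0 < a) :
    AntitoneOn (fun τ => φinv (a / τ ^ m)) (Ioi 0) := by
  intro x hx y hy hxy
  have hx' : 0 < a / x ^ m := div_pos ha (pow_pos hx m)
  have hy' : 0 < a / y ^ m := div_pos ha (pow_pos hy m)
  refine (hφ.le_iff_le (hpos _ hy') (hpos _ hx')).1 ?_
  rw [hright _ hy', hright _ hx']
  have : 0 < x := hx
  gcongr

/-- the case `p = n`: properties of
`v̄_a(r) = ∫_s^r φ⁻¹(a τ^{-(n-1)}) dτ`. -/
theorem stmt_5 (n : ℕ) (hn : 2 ≤ n)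
    (A : ℝ → ℝ) (hA_cont : ContinuousOn A (Ici 0)) (hA0 : 0 < A 0)
    (φ : ℝ → ℝ) (hφ : ∀ t, φ t = t ^ ((n : ℝ) - 1) * A t)
    (hφ_mono : StrictMonoOn φ (Ioi 0))
    (L δ : ℝ) (hδ : 0 < δ) (hδL : δ ≤ L)
    (hA_bound : ∀ t ≥ (0 : ℝ), δ ≤ A t ∧ A t ≤ L)
    (φinv : ℝ → ℝ)
    (hφinv_left : ∀ t ≥ (0 : ℝ), φinv (φ t) = t)
    (hφinv_right : ∀ s ≥ (0 : ℝ), φ (φinv s) = s)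
    (hφinv_nonneg : ∀ s ≥ (0 : ℝ), 0 ≤ φinv s)
    (s : ℝ) (hs : 0 < s)
    (vbar : ℝ → ℝ → ℝ)
    (hvbar : ∀ a r, vbar a r = ∫ τ in Ioc s r, φinv (a / τ ^ (n - 1))) :
    (∀ a > (0 : ℝ), vbar a s = 0) ∧
    (∀ a > (0 : ℝ), StrictMonoOn (vbar a) (Ici s)) ∧
    (∀ a > (0 : ℝ), ∀ M > (0 : ℝ), ∃ r ≥ s, M < vbar a r) ∧
    (∀ r ≥ s, Tendsto (fun a => vbar a r) (𝓝[>] (0 : ℝ)) (𝓝 0)) := by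
  obtain ⟨m, rfl⟩ : ∃ m, n = m + 1 := ⟨n - 1, by omega⟩
  have hm : m ≠ 0 := by omega
  have hL : 0 < L := hδ.trans_le hδL
  simp only [Nat.add_sub_cancel] at hvbar
  have hφ' : ∀ t, φ t = t ^ m * A t := by
    intro t
    rw [hφ t]
    push_cast
    rw [add_sub_cancel_right, Real.rpow_natCast]
  have hpos : ∀ y > (0 : ℝ), 0 < φinv y := by
    intro y hy
    refine (hφinv_nonneg y hy.le).lt_of_ne fun h => ?_
    have h1 := hφinv_right y hy.le
    rw [← h, hφ', zero_pow hm, zero_mul] at h1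
    exact hy.ne h1
  have hquot : ∀ a > (0 : ℝ), ∀ τ > (0 : ℝ), 0 < a / τ ^ m := fun a ha τ hτ => by positivity
  have hupper : ∀ a > (0 : ℝ), ∀ τ > (0 : ℝ),
      φinv (a / τ ^ m) ≤ (a / δ) ^ ((m : ℝ)⁻¹) / τ := by
    intro a ha τ hτ
    have ht := hpos _ (hquot a ha τ hτ)
    refine inverse_le_div hm hδ ht.le hτ ?_
    calc δ * φinv (a / τ ^ m) ^ m ≤ A (φinv (a / τ ^ m)) * φinv (a / τ ^ m) ^ m := by
          gcongr
          exact (hA_bound _ ht.le).1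
      _ = a / τ ^ m := by
          rw [mul_comm, ← hφ', hφinv_right _ (hquot a ha τ hτ).le]
  have hlower : ∀ a > (0 : ℝ), ∀ τ > (0 : ℝ),
      (a / L) ^ ((m : ℝ)⁻¹) / τ ≤ φinv (a / τ ^ m) := by
    intro a ha τ hτ
    have ht := hpos _ (hquot a ha τ hτ)
    refine div_le_inverse hm hL ha.le ht.le hτ ?_
    calc a / τ ^ m = A (φinv (a / τ ^ m)) * φinv (a / τ ^ m) ^ m := by
          rw [mul_comm, ← hφ', hφinv_right _ (hquot a ha τ hτ).le]
      _ ≤ L * φinv (a / τ ^ m) ^ m := by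
          gcongr
          exact (hA_bound _ ht.le).2
  have hint : ∀ a > (0 : ℝ), ∀ x ≥ s, ∀ y ≥ s,
      IntervalIntegrable (fun τ => φinv (a / τ ^ m)) volume x y := by
    intro a ha x hx y hy
    refine ((antitoneOn_integrand hφ_mono (fun y hy => hφinv_right y hy.le) hpos m ha).mono
      fun τ hτ => ?_).intervalIntegrable
    exact (lt_min (hs.trans_le hx) (hs.trans_le hy)).trans_le hτ.1
  have hv : ∀ a, ∀ r ≥ s, vbar a r = ∫ τ in s..r, φinv (a / τ ^ m) := by
    intro a r hr
    rw [hvbar, intervalIntegral.integral_of_le hr]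
  refine ⟨fun a _ => by simp [hvbar], ?_, ?_, ?_⟩
  · intro a ha x hx y hy hxy
    rw [hv a x hx, hv a y hy, ← sub_pos, intervalIntegral.integral_interval_sub_left
      (hint a ha s le_rfl y hy) (hint a ha s le_rfl x hx)]
    refine intervalIntegral.intervalIntegral_pos_of_pos_on (hint a ha x hx y hy) ?_ hxy
    intro τ hτ
    exact hpos _ (hquot a ha τ ((hs.trans_le hx).trans hτ.1))
  · intro a ha M hM
    set c := (a / L) ^ ((m : ℝ)⁻¹) with hc_def
    have hc : 0 < c := by positivity
    -- With this choice of `r` the lower bound `c * log (r / s)` equals `M + 1`.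
    have hr : s ≤ s * Real.exp ((M + 1) / c) :=
      le_mul_of_one_le_right hs.le (Real.one_le_exp (by positivity))
    refine ⟨s * Real.exp ((M + 1) / c), hr, ?_⟩
    rw [hv a _ hr]
    have hlog : ∫ τ in s..s * Real.exp ((M + 1) / c), c * τ⁻¹ = M + 1 := by
      rw [intervalIntegral.integral_const_mul, integral_inv_of_pos hs (by positivity),
        mul_div_cancel_left₀ _ hs.ne', Real.log_exp, mul_div_cancel₀ _ hc.ne']
    have hi : IntervalIntegrable (fun τ : ℝ => c * τ⁻¹) volume s
        (s * Real.exp ((M + 1) / c)) := by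
      refine (intervalIntegral.intervalIntegrable_inv (fun τ hτ => ?_)
        continuousOn_id).const_mul c
      rw [uIcc_of_le hr] at hτ
      exact (hs.trans_le hτ.1).ne'
    have hle := intervalIntegral.integral_mono_on hr hi (hint a ha s le_rfl _ hr)
      fun τ hτ => by
        rw [← div_eq_mul_inv]
        exact hlower a ha τ (hs.trans_le hτ.1)
    linarith
  · intro r hr
    have hbound : ∀ a > (0 : ℝ), ‖vbar a r‖ ≤ (a / δ) ^ ((m : ℝ)⁻¹) / s * |r - s| := by
      intro a ha
      rw [hv a r hr]
      refine intervalIntegral.norm_integral_le_of_norm_le_const fun τ hτ => ?_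
      rw [uIoc_of_le hr] at hτ
      have hτ0 : 0 < τ := hs.trans hτ.1
      rw [Real.norm_of_nonneg (hpos _ (hquot a ha τ hτ0)).le]
      refine (hupper a ha τ hτ0).trans ?_
      gcongr
      exact hτ.1.le
    have hlim : Tendsto (fun a : ℝ => (a / δ) ^ ((m : ℝ)⁻¹) / s * |r - s|) (𝓝[>] 0) (𝓝 0) := by
      have hcont : Continuous fun a : ℝ => (a / δ) ^ ((m : ℝ)⁻¹) / s * |r - s| :=
        (((continuous_id.div_const δ).rpow_const fun _ => Or.inr (by positivity)).div_const
          s).mul_const _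
      have h0 := hcont.tendsto 0
      rw [zero_div, Real.zero_rpow (by positivity), zero_div, zero_mul] at h0
      exact h0.mono_left nhdsWithin_le_nhds
    refine squeeze_zero_norm' ?_ hlim
    filter_upwards [self_mem_nhdsWithin] with a ha
    exact hbound a ha
end

section
/- Let n ≥ 2 be an integer, p ≥ n a real number, K ⊂ ℝⁿ a nonempty compact set, and let A : [0,∞) → ℝ satisfy conditions (i)–(iv) as in the context. Let u ∈ C¹(ℝⁿ\K) be a bounded weak solution of div(|∇u|^{p-2}A(|∇u|)∇u) = 0 in ℝⁿ\K. Define S = sup_{x₀ ∈ ∂K} limsup_{x → x₀, x ∈ ℝⁿ\K} u(x) and I = inf_{x₀ ∈ ∂K} liminf_{x → x₀, x ∈ ℝⁿ\K} u(x). Then I ≤ u(x) ≤ S for every x ∈ ℝⁿ\K. -/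
open Real MeasureTheory Set Filter Topology
open scoped RealInnerProductSpace

/-!
The result is a maximum principle at infinity: since `p ≥ n`, infinity has zero `p`-capacity, so
a bounded solution needs no boundary condition there.

Let `k` exceed the supremum of the boundary limsups. Then `u < k` near `K`, so the truncation
`V = ((u - k)⁺)²`, extended by zero across `K`, is `C¹` on the whole space with support away from
`K`. Mollification (`weak_of_contDiff_one`) allows the `C¹` test function `η ^ p * V`, where `η` is
a compactly supported cutoff. The bounds `δ ≤ A ≤ L` and Young's inequality
(`caccioppoli_pointwise`) give the Caccioppoli estimate
`∫ (u - k)⁺ |∇u| ^ p η ^ p ≤ C ∫ |∇η| ^ p`, with `C` depending on the bound for `u` but not on `η`.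
Cutoffs equal to `1` on any prescribed ball with arbitrarily small right-hand side exist because
`p ≥ n` (`exists_cutoff`). Hence `∇V = 2 (u - k)⁺ ∇u` vanishes identically, `V` is constant, and it
is zero on `K`, that is, `u ≤ k` (`le_of_eventually_lt`). The function `-u` solves the same
equation, which gives the lower bound.
-/

section

/-! ### `C¹` test functions and Young's inequality -/

open scoped Convolution

variable {E : Type*} [NormedAddCommGroup E] [InnerProductSpace ℝ E] [FiniteDimensional ℝ E]
  [MeasurableSpace E] [BorelSpace E]

/-- A compactly supported `C¹` function is approximated in `C¹` by its mollifications, whose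
supports stay in a given thickening of the original support. -/
lemma exists_smooth_approx {ψ : E → ℝ} (hψ : ContDiff ℝ 1 ψ) (hc : HasCompactSupport ψ)
    {r ε : ℝ} (hr : 0 < r) (hε : 0 < ε) :
    ∃ g : E → ℝ, ContDiff ℝ (⊤ : ℕ∞) g ∧ HasCompactSupport g ∧
      tsupport g ⊆ Metric.cthickening r (tsupport ψ) ∧
      ∀ x, ‖fderiv ℝ g x - fderiv ℝ ψ x‖ ≤ ε := by
  have hcont : Continuous (fderiv ℝ ψ) := hψ.continuous_fderiv one_ne_zero
  have hcf : HasCompactSupport (fderiv ℝ ψ) := hc.fderiv ℝ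
  obtain ⟨d, hd, hdε⟩ := Metric.uniformContinuous_iff.1
    (hcf.uniformContinuous_of_continuous hcont) ε hε
  have hm : 0 < min d r := lt_min hd hr
  let φ : ContDiffBump (0 : E) := ⟨min d r / 2, min d r, by linarith, by linarith⟩
  let g : E → ℝ := φ.normed volume ⋆[ContinuousLinearMap.lsmul ℝ ℝ, volume] ψ
  have hsub : tsupport g ⊆ Metric.cthickening r (tsupport ψ) := by
    refine closure_minimal ?_ Metric.isClosed_cthickening
    refine (support_convolution_subset _).trans ?_
    rw [φ.support_normed_eq]
    rintro x ⟨a, ha, b, hb, rfl⟩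
    refine Metric.mem_cthickening_of_dist_le _ b _ _ (subset_tsupport _ hb) ?_
    have h1 : ‖a‖ < min d r := mem_ball_zero_iff.1 ha
    simpa [dist_eq_norm] using h1.le.trans (min_le_right _ _)
  refine ⟨g, ?_, ?_, hsub, fun x => ?_⟩
  · exact φ.hasCompactSupport_normed.contDiff_convolution_left _ φ.contDiff_normed
      hψ.continuous.locallyIntegrable
  · exact HasCompactSupport.of_support_subset_isCompact (IsCompact.cthickening hc)
      ((subset_tsupport _).trans hsub)
  · have h1 : HasFDerivAt g _ x := hc.hasFDerivAt_convolution_right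
      (ContinuousLinearMap.lsmul ℝ ℝ)
      (φ.continuous_normed (μ := volume)).locallyIntegrable hψ x
    have h2 : fderiv ℝ g x =
        (φ.normed volume ⋆[ContinuousLinearMap.lsmul ℝ ℝ, volume] fderiv ℝ ψ) x := by
      rw [h1.fderiv]
      -- `(lsmul ℝ ℝ).precompR E` and `lsmul ℝ ℝ` both act by scalar multiplication
      unfold convolution
      congr 1
    rw [h2, ← dist_eq_norm]
    refine φ.dist_normed_convolution_le hcont.aestronglyMeasurable fun y hy => ?_
    exact (hdε (lt_of_lt_of_le (Metric.mem_ball.1 hy) (min_le_left d r))).le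

/-- A weak equation `div X = 0` with a continuous field `X` that holds against smooth test functions
holds against `C¹` test functions. The pairing `⟪X, ∇ψ⟫` is written `fderiv ℝ ψ x (X x)`. -/
lemma weak_of_contDiff_one {Ω : Set E} (hΩ : IsOpen Ω) {X : E → E} (hX : ContinuousOn X Ω)
    (hw : ∀ ψ : E → ℝ, ContDiff ℝ (⊤ : ℕ∞) ψ → HasCompactSupport ψ → tsupport ψ ⊆ Ω →
      ∫ x in Ω, fderiv ℝ ψ x (X x) = 0)
    {ψ : E → ℝ} (hψ : ContDiff ℝ 1 ψ) (hc : HasCompactSupport ψ) (hs : tsupport ψ ⊆ Ω) :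
    ∫ x in Ω, fderiv ℝ ψ x (X x) = 0 := by
  obtain ⟨r, hr, hrΩ⟩ := IsCompact.exists_cthickening_subset_open hc hΩ hs
  set T := Metric.cthickening r (tsupport ψ) with hT
  have hTc : IsCompact T := IsCompact.cthickening hc
  have hsT : tsupport ψ ⊆ T := Metric.self_subset_cthickening _
  obtain ⟨B, hB⟩ := hTc.exists_bound_of_continuousOn (hX.mono hrΩ)
  have hB0 : 0 ≤ |B| := abs_nonneg B
  have key : ∀ g : E → ℝ, ContDiff ℝ 1 g → tsupport g ⊆ T →
      ∫ x in Ω, fderiv ℝ g x (X x) = ∫ x in T, fderiv ℝ g x (X x) := by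
    intro g _ hg
    refine setIntegral_eq_of_subset_of_forall_sdiff_eq_zero hΩ.measurableSet hrΩ fun x hx => ?_
    have : fderiv ℝ g x = 0 := by
      by_contra h
      exact hx.2 (hg (support_fderiv_subset ℝ h))
    simp [this]
  have hFint : ∀ g : E → ℝ, ContDiff ℝ 1 g → IntegrableOn (fun x => fderiv ℝ g x (X x)) T := by
    intro g hg
    refine ContinuousOn.integrableOn_compact hTc ?_
    exact (hg.continuous_fderiv one_ne_zero).continuousOn.clm_apply (hX.mono hrΩ)
  have hbd : ∀ ε > 0, |∫ x in Ω, fderiv ℝ ψ x (X x)| ≤ ε * (|B| * volume.real T) := by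
    intro ε hε
    obtain ⟨g, hg, hgc, hgs, hgε⟩ := exists_smooth_approx hψ hc hr hε
    have hg1 : ContDiff ℝ 1 g := hg.of_le (by exact_mod_cast le_top)
    have h0 := hw g hg hgc (hgs.trans hrΩ)
    rw [key g hg1 hgs] at h0
    rw [key ψ hψ hsT, ← sub_zero (∫ x in T, fderiv ℝ ψ x (X x)), ← h0,
      ← integral_sub (hFint ψ hψ) (hFint g hg1), ← Real.norm_eq_abs, ← mul_assoc]
    refine norm_setIntegral_le_of_norm_le_const hTc.measure_lt_top fun x hx => ?_
    rw [← sub_apply]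
    refine (ContinuousLinearMap.le_opNorm _ _).trans ?_
    rw [norm_sub_rev]
    exact mul_le_mul (hgε x) ((hB x hx).trans (le_abs_self B)) (norm_nonneg _) hε.le
  have hlim : Tendsto (fun ε : ℝ => ε * (|B| * volume.real T)) (𝓝[>] 0) (𝓝 0) := by
    have : Tendsto (fun ε : ℝ => ε * (|B| * volume.real T)) (𝓝 0) (𝓝 (0 * (|B| * volume.real T))) :=
      tendsto_id.mul_const _
    rw [zero_mul] at this
    exact this.mono_left nhdsWithin_le_nhds
  have : |∫ x in Ω, fderiv ℝ ψ x (X x)| ≤ 0 :=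
    ge_of_tendsto hlim (eventually_mem_nhdsWithin.mono fun ε hε => hbd ε hε)
  exact abs_eq_zero.1 (le_antisymm this (abs_nonneg _))

/-- Young's inequality with a non-optimal constant, by comparing `b` with `ε * a`. -/
lemma rpow_young {p a b ε : ℝ} (hp : 1 ≤ p) (ha : 0 ≤ a) (hb : 0 ≤ b) (hε : 0 < ε) :
    a ^ (p - 1) * b ≤ ε * a ^ p + (1 / ε) ^ (p - 1) * b ^ p := by
  have hsplit : ∀ t : ℝ, 0 ≤ t → t ^ (p - 1) * t = t ^ p := by
    intro t ht
    rcases ht.eq_or_lt with rfl | ht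
    · rw [mul_zero, Real.zero_rpow (by linarith)]
    · rw [← Real.rpow_add_one ht.ne']; congr 1; ring
  have h1 : 0 ≤ a ^ (p - 1) := Real.rpow_nonneg ha _
  rcases le_total b (ε * a) with h | h
  · have h2 : 0 ≤ (1 / ε) ^ (p - 1) * b ^ p := by positivity
    have h3 := mul_le_mul_of_nonneg_left h h1
    have := hsplit a ha
    nlinarith
  · have h2 : a ≤ 1 / ε * b := by
      rw [one_div, inv_mul_eq_div, le_div_iff₀ hε]; linarith
    have h3 : a ^ (p - 1) ≤ (1 / ε * b) ^ (p - 1) :=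
      Real.rpow_le_rpow ha h2 (by linarith)
    rw [Real.mul_rpow (by positivity) hb] at h3
    have h4 := mul_le_mul_of_nonneg_right h3 hb
    rw [mul_assoc, hsplit b hb] at h4
    have : 0 ≤ ε * a ^ p := by positivity
    linarith

/-! ### Cutoffs of small energy -/

/-- At most one of the summands is nonzero, so `‖·‖ ^ p` commutes with the sum. -/
lemma norm_sum_rpow_of_pairwise {F : Type*} [NormedAddCommGroup F] {p : ℝ} (hp : 0 < p)
    (s : Finset ℕ) (f : ℕ → F)
    (h : ∀ i ∈ s, ∀ j ∈ s, i ≠ j → f i = 0 ∨ f j = 0) :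
    ‖∑ i ∈ s, f i‖ ^ p = ∑ i ∈ s, ‖f i‖ ^ p := by
  by_cases h0 : ∃ i ∈ s, f i ≠ 0
  · obtain ⟨i, hi, hne⟩ := h0
    have hz : ∀ j ∈ s, j ≠ i → f j = 0 := fun j hj hji =>
      (h i hi j hj hji.symm).resolve_left hne
    rw [Finset.sum_eq_single_of_mem i hi hz, Finset.sum_eq_single_of_mem i hi]
    intro j hj hji
    rw [hz j hj hji, norm_zero, Real.zero_rpow hp.ne']
  · push Not at h0
    rw [Finset.sum_eq_zero h0, norm_zero, Real.zero_rpow hp.ne', Finset.sum_eq_zero]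
    intro j hj
    rw [h0 j hj, norm_zero, Real.zero_rpow hp.ne']

/-- Balls have zero `p`-capacity in the whole space when `p ≥ dim E`, `p > 1`. The cutoff is the
average of `N` rescaled bumps `χ (x / s j)`, `s j = R * 4 ^ j`, whose gradients live in disjoint
annuli. Each has `p`-energy at most that of `χ`, because `s j ^ (dim E - p) ≤ 1`, so the average
has `p`-energy at most `N ^ (-p) * N * c`, which tends to `0`. -/
lemma exists_cutoff {p : ℝ} (hp1 : 1 < p) (hp : (Module.finrank ℝ E : ℝ) ≤ p) (r : ℝ) {ε : ℝ}
    (hε : 0 < ε) :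
    ∃ η : E → ℝ, ContDiff ℝ 1 η ∧ HasCompactSupport η ∧ (∀ x, 0 ≤ η x) ∧
      (∀ x ∈ Metric.closedBall (0 : E) r, η x = 1) ∧ ∫ x, ‖fderiv ℝ η x‖ ^ p ≤ ε := by
  have hp0 : 0 < p := by linarith
  let χ : ContDiffBump (0 : E) := ⟨1, 2, one_pos, by norm_num⟩
  have hχ : ContDiff ℝ 1 χ := χ.contDiff
  set D : E → (E →L[ℝ] ℝ) := fderiv ℝ χ with hD
  have hDc : Continuous D := hχ.continuous_fderiv one_ne_zero
  have hDs : HasCompactSupport D := χ.hasCompactSupport.fderiv ℝ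
  have hDnz : ∀ y, D y ≠ 0 → 1 ≤ ‖y‖ ∧ ‖y‖ ≤ 2 := by
    intro y hy
    constructor
    · by_contra! hlt
      apply hy
      have h1 : (χ : E → ℝ) =ᶠ[𝓝 y] 1 := χ.eventuallyEq_one_of_mem_ball (mem_ball_zero_iff.2 hlt)
      rw [hD, h1.fderiv_eq]
      simp
    · have h1 : y ∈ tsupport χ := support_fderiv_subset ℝ hy
      rw [χ.tsupport_eq] at h1
      exact mem_closedBall_zero_iff.1 h1
  set R := max r 1 with hR
  have hR1 : 1 ≤ R := le_max_right _ _
  set s : ℕ → ℝ := fun j => R * 4 ^ j with hs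
  have h4 : ∀ j : ℕ, (1 : ℝ) ≤ 4 ^ j := fun j => one_le_pow₀ (by norm_num)
  have hsR : ∀ j, R ≤ s j := fun j => le_mul_of_one_le_right (by linarith) (h4 j)
  have hs1 : ∀ j, 1 ≤ s j := fun j => hR1.trans (hsR j)
  have hs0 : ∀ j, 0 < s j := fun j => by linarith [hs1 j]
  have hslt : ∀ i j, i < j → 2 * s i < s j := by
    intro i j hij
    have h1 : (4 : ℝ) ^ (i + 1) ≤ 4 ^ j := pow_le_pow_right₀ (by norm_num) hij
    have h2 : R * 4 ^ (i + 1) ≤ R * 4 ^ j := mul_le_mul_of_nonneg_left h1 (by linarith)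
    have h3 := hs0 i
    simp only [hs] at h3 ⊢
    rw [pow_succ] at h2
    linarith
  set G : ℕ → E → (E →L[ℝ] ℝ) := fun j x => (s j)⁻¹ • D ((s j)⁻¹ • x) with hG
  have hder : ∀ j x, HasFDerivAt (fun x => χ ((s j)⁻¹ • x)) (G j x) x := by
    intro j x
    have h1 : HasFDerivAt χ (D ((s j)⁻¹ • x)) ((s j)⁻¹ • x) :=
      (hχ.differentiable one_ne_zero _).hasFDerivAt
    have h2 := h1.comp x ((hasFDerivAt_id x).const_smul (s j)⁻¹)
    convert! h2 using 1
    ext v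
    simp [hG]
  have hGnz : ∀ j x, G j x ≠ 0 → s j ≤ ‖x‖ ∧ ‖x‖ ≤ 2 * s j := by
    intro j x hx
    have h1 := hDnz ((s j)⁻¹ • x) (fun h => hx (by simp [hG, h]))
    rw [norm_smul, norm_inv, Real.norm_of_nonneg (hs0 j).le, inv_mul_eq_div,
      le_div_iff₀ (hs0 j), div_le_iff₀ (hs0 j), one_mul] at h1
    exact h1
  have hGdisj : ∀ x i j, i ≠ j → G i x = 0 ∨ G j x = 0 := by
    intro x i j hij
    by_contra! h
    have h1 := hGnz i x h.1
    have h2 := hGnz j x h.2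
    rcases lt_or_gt_of_ne hij with h3 | h3
    · linarith [hslt i j h3]
    · linarith [hslt j i h3]
  set c := ∫ x, ‖D x‖ ^ p with hc
  have hc0 : 0 ≤ c := integral_nonneg fun x => by positivity
  have hDp : Continuous fun x => ‖D x‖ ^ p := hDc.norm.rpow_const fun _ => Or.inr hp0.le
  have hDpi : Integrable (fun x => ‖D x‖ ^ p) :=
    hDp.integrable_of_hasCompactSupport
      (hDs.comp_left (g := fun L : E →L[ℝ] ℝ => ‖L‖ ^ p) (by simp [Real.zero_rpow hp0.ne']))
  have hGeq : ∀ j x, ‖G j x‖ ^ p = (s j)⁻¹ ^ p * ‖D ((s j)⁻¹ • x)‖ ^ p := by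
    intro j x
    have h0 := (hs0 j).le
    rw [hG, norm_smul, norm_inv, Real.norm_of_nonneg h0,
      Real.mul_rpow (by positivity) (norm_nonneg _)]
  have hGi : ∀ j, Integrable (fun x => ‖G j x‖ ^ p) := by
    intro j
    simp only [hGeq]
    exact (hDpi.comp_smul (inv_ne_zero (hs0 j).ne')).const_mul _
  have hGint : ∀ j, ∫ x, ‖G j x‖ ^ p ≤ c := by
    intro j
    simp only [hGeq]
    rw [integral_const_mul, Measure.integral_comp_inv_smul_of_nonneg volume
      (fun x => ‖D x‖ ^ p) (hs0 j).le, smul_eq_mul, ← mul_assoc]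
    refine mul_le_of_le_one_left hc0 ?_
    rw [Real.inv_rpow (hs0 j).le, inv_mul_le_iff₀ (Real.rpow_pos_of_pos (hs0 j) _), mul_one,
      ← Real.rpow_natCast]
    exact Real.rpow_le_rpow_of_exponent_le (hs1 j) hp
  have hlim : Tendsto (fun N : ℕ => c * (N : ℝ) ^ (-(p - 1))) atTop (𝓝 0) := by
    have := ((tendsto_rpow_neg_atTop (sub_pos.2 hp1)).comp
      tendsto_natCast_atTop_atTop).const_mul c
    simpa using this
  obtain ⟨N, hN1, hN⟩ := ((eventually_ge_atTop 1).and (hlim.eventually_le_const hε)).exists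
  have hNpos : (0 : ℝ) < N := by exact_mod_cast hN1
  refine ⟨fun x => (N : ℝ)⁻¹ * ∑ j ∈ Finset.range N, χ ((s j)⁻¹ • x), ?_, ?_, ?_, ?_, ?_⟩
  · exact contDiff_const.mul (ContDiff.sum fun j _ => hχ.comp (contDiff_const_smul _))
  · refine HasCompactSupport.intro (isCompact_closedBall (0 : E) (2 * s N)) fun x hx => ?_
    rw [mem_closedBall_zero_iff, not_le] at hx
    rw [Finset.sum_eq_zero, mul_zero]
    intro j hj
    apply χ.zero_of_le_dist
    have h1 := hslt j N (Finset.mem_range.1 hj)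
    rw [dist_zero_right, norm_smul, norm_inv, Real.norm_of_nonneg (hs0 j).le, inv_mul_eq_div,
      le_div_iff₀ (hs0 j)]
    change 2 * s j ≤ ‖x‖
    linarith [hs0 N]
  · intro x
    have : 0 ≤ ∑ j ∈ Finset.range N, χ ((s j)⁻¹ • x) := Finset.sum_nonneg fun _ _ => χ.nonneg
    positivity
  · intro x hx
    rw [mem_closedBall_zero_iff] at hx
    have h1 : ∀ j ∈ Finset.range N, χ ((s j)⁻¹ • x) = 1 := by
      intro j _
      apply χ.one_of_mem_closedBall
      rw [mem_closedBall_zero_iff, norm_smul, norm_inv, Real.norm_of_nonneg (hs0 j).le,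
        inv_mul_eq_div, div_le_iff₀ (hs0 j)]
      change ‖x‖ ≤ 1 * s j
      linarith [hsR j, le_max_left r 1]
    beta_reduce
    rw [Finset.sum_congr rfl h1]
    simp [hNpos.ne']
  · have hfd : ∀ x, fderiv ℝ (fun x => (N : ℝ)⁻¹ * ∑ j ∈ Finset.range N, χ ((s j)⁻¹ • x)) x
        = (N : ℝ)⁻¹ • ∑ j ∈ Finset.range N, G j x := fun x =>
      ((HasFDerivAt.fun_sum fun j _ => hder j x).const_mul _).fderiv
    have hpt : ∀ x, ‖(N : ℝ)⁻¹ • ∑ j ∈ Finset.range N, G j x‖ ^ p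
        = (N : ℝ)⁻¹ ^ p * ∑ j ∈ Finset.range N, ‖G j x‖ ^ p := by
      intro x
      rw [norm_smul, norm_inv, Real.norm_of_nonneg hNpos.le,
        Real.mul_rpow (by positivity) (norm_nonneg _),
        norm_sum_rpow_of_pairwise hp0 _ _ fun i _ j _ => hGdisj x i j]
    simp only [hfd, hpt]
    rw [integral_const_mul, integral_finsetSum _ fun j _ => hGi j]
    refine le_trans ?_ hN
    have h1 : ∑ j ∈ Finset.range N, ∫ x, ‖G j x‖ ^ p ≤ N * c := by
      simpa using Finset.sum_le_sum (s := Finset.range N) fun j _ => hGint j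
    calc (N : ℝ)⁻¹ ^ p * ∑ j ∈ Finset.range N, ∫ x, ‖G j x‖ ^ p
        ≤ (N : ℝ)⁻¹ ^ p * (N * c) := mul_le_mul_of_nonneg_left h1 (by positivity)
      _ = c * (N : ℝ) ^ (-(p - 1)) := by
        rw [Real.inv_rpow hNpos.le, ← Real.rpow_neg hNpos.le, neg_sub, sub_eq_neg_add,
          Real.rpow_add_one hNpos.ne']
        ring

/-! ### The Caccioppoli estimate and the maximum principle -/

lemma hasDerivAt_max_sq (t : ℝ) : HasDerivAt (fun t : ℝ => max t 0 ^ 2) (2 * max t 0) t := by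
  rcases lt_trichotomy t 0 with h | rfl | h
  · have : (fun t : ℝ => max t 0 ^ 2) =ᶠ[𝓝 t] fun _ => 0 := by
      filter_upwards [Iio_mem_nhds h] with y hy
      simp [max_eq_right (mem_Iio.1 hy).le]
    rw [max_eq_right h.le, mul_zero]
    exact (hasDerivAt_const t (0 : ℝ)).congr_of_eventuallyEq this
  · rw [hasDerivAt_iff_isLittleO_nhds_zero]
    refine (Asymptotics.IsBigO.of_bound 1 ?_).trans_isLittleO
      (Asymptotics.isLittleO_pow_id (𝕜 := ℝ) (n := 2) one_lt_two)
    refine Eventually.of_forall fun y => ?_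
    simp only [zero_add, max_self, mul_zero, smul_zero, sub_zero, one_mul, norm_pow,
      Real.norm_eq_abs, zero_pow two_ne_zero]
    refine pow_le_pow_left₀ (abs_nonneg _) ?_ 2
    rw [abs_of_nonneg (le_max_right y 0)]
    exact max_le (le_abs_self y) (abs_nonneg y)
  · have : (fun t : ℝ => max t 0 ^ 2) =ᶠ[𝓝 t] fun t => t ^ 2 := by
      filter_upwards [Ioi_mem_nhds h] with y hy
      rw [max_eq_left (mem_Ioi.1 hy).le]
    rw [max_eq_left h.le]
    simpa using (hasDerivAt_pow 2 t).congr_of_eventuallyEq this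

/-- The algebra of the Caccioppoli estimate at one point. Here `g = ‖∇u‖`, `e = η`, `d = ‖∇η‖`,
`a = A(‖∇u‖)`, `s = ⟪∇η, ∇u⟫`, while `v` and `w` are the values of the truncation `((u - k)⁺)²`
and of its derivative `2 (u - k)⁺`. The cross term is absorbed by Young's inequality. -/
lemma caccioppoli_pointwise {p δ L N g e d w v a s : ℝ} (hp : 2 ≤ p) (hδ : 0 < δ) (hN : 0 ≤ N)
    (hg : 0 ≤ g) (he : 0 ≤ e) (hd : 0 ≤ d) (hw : 0 ≤ w) (hwN : w ≤ 2 * N) (hv : 0 ≤ v)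
    (hvw : v ≤ w * N) (hδa : δ ≤ a) (haL : a ≤ L) (hs : |s| ≤ d * g) :
    δ / 2 * (w * (e ^ p * g ^ p)) ≤
      e ^ p * (w * (g ^ (p - 2) * a * g ^ 2)) + v * (p * e ^ (p - 1) * (g ^ (p - 2) * a * s)) +
      2 * N * (1 / (δ / 2)) ^ (p - 1) * (p * N * L) ^ p * d ^ p := by
  have hL : 0 ≤ L := by linarith
  have ha : 0 ≤ a := by linarith
  have hp0 : 0 ≤ p := by linarith
  have e1 : g ^ (p - 2) * g ^ 2 = g ^ p := by
    rw [← Real.rpow_natCast, ← Real.rpow_add_of_nonneg hg (by linarith) (by norm_num)]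
    norm_num
  have e2 : g ^ (p - 2) * g = g ^ (p - 1) := by
    nth_rewrite 2 [← Real.rpow_one g]
    rw [← Real.rpow_add_of_nonneg hg (by linarith) (by norm_num)]
    congr 1; ring
  have hG : 0 ≤ g ^ (p - 2) := Real.rpow_nonneg hg _
  have hG1 : 0 ≤ g ^ (p - 1) := Real.rpow_nonneg hg _
  have hE : 0 ≤ e ^ p := Real.rpow_nonneg he _
  have hE1 : 0 ≤ e ^ (p - 1) := Real.rpow_nonneg he _
  have t1 : δ * (w * (e ^ p * g ^ p)) ≤ e ^ p * (w * (g ^ (p - 2) * a * g ^ 2)) := by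
    have : e ^ p * (w * (g ^ (p - 2) * a * g ^ 2)) = a * (w * (e ^ p * g ^ p)) := by
      rw [← e1]; ring
    rw [this]
    exact mul_le_mul_of_nonneg_right hδa (by positivity)
  have t2 : |v * (p * e ^ (p - 1) * (g ^ (p - 2) * a * s))| ≤
      w * ((e * g) ^ (p - 1) * (p * N * L * d)) := by
    rw [abs_mul v, abs_mul (p * _), abs_mul (g ^ (p - 2) * a), abs_of_nonneg hv, abs_of_nonneg (mul_nonneg hp0 hE1),
      abs_of_nonneg (mul_nonneg hG ha), Real.mul_rpow he hg, ← e2]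
    calc v * (p * e ^ (p - 1) * (g ^ (p - 2) * a * |s|))
        ≤ (w * N) * (p * e ^ (p - 1) * (g ^ (p - 2) * L * (d * g))) := by gcongr
      _ = _ := by ring
  have t3 := rpow_young (p := p) (by linarith) (mul_nonneg he hg)
    (show 0 ≤ p * N * L * d by positivity) (half_pos hδ)
  rw [Real.mul_rpow he hg, Real.mul_rpow (show 0 ≤ p * N * L by positivity) hd,
    Real.mul_rpow he hg] at t3
  rw [Real.mul_rpow he hg] at t2
  have t4 := mul_le_mul_of_nonneg_left t3 hw
  have t5 : w * ((1 / (δ / 2)) ^ (p - 1) * ((p * N * L) ^ p * d ^ p)) ≤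
      2 * N * ((1 / (δ / 2)) ^ (p - 1) * ((p * N * L) ^ p * d ^ p)) :=
    mul_le_mul_of_nonneg_right hwN (by positivity)
  have t6 := neg_le_of_abs_le t2
  nlinarith

/-- The upper bound in the form used for both `u` and `-u`: a strict bound near `∂K` propagates
to the whole complement of `K`. -/
lemma le_of_eventually_lt {p δ L M k : ℝ} (hp2 : 2 ≤ p) (hp : (Module.finrank ℝ E : ℝ) ≤ p)
    (hδ : 0 < δ) {K : Set E} (hK : IsClosed K) (hKne : K.Nonempty)
    {A : ℝ → ℝ} (hA_cont : ContinuousOn A (Ici 0))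
    (hA_bound : ∀ t ≥ (0 : ℝ), δ ≤ A t ∧ A t ≤ L)
    {u : E → ℝ} (hu : ContDiffOn ℝ 1 u Kᶜ) (hM : ∀ x ∈ Kᶜ, |u x| ≤ M)
    (hw : ∀ ψ : E → ℝ, ContDiff ℝ (⊤ : ℕ∞) ψ → HasCompactSupport ψ → tsupport ψ ⊆ Kᶜ →
      ∫ x in Kᶜ, fderiv ℝ ψ x ((‖gradient u x‖ ^ (p - 2) * A ‖gradient u x‖) • gradient u x) = 0)
    (hk : ∀ x₀ ∈ frontier K, ∀ᶠ x in 𝓝[Kᶜ] x₀, u x < k) :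
    ∀ x ∈ Kᶜ, u x ≤ k := by
  classical
  have hΩ : IsOpen Kᶜ := hK.isOpen_compl
  have hp0 : 0 < p := by linarith
  -- `u < k` near every point of `K`
  have hnear : ∀ x ∈ K, ∀ᶠ y in 𝓝 x, y ∈ K ∨ u y < k := by
    intro x hx
    by_cases hi : x ∈ interior K
    · filter_upwards [mem_interior_iff_mem_nhds.1 hi] with y hy using Or.inl hy
    · have h1 := hk x ⟨subset_closure hx, hi⟩
      rw [eventually_nhdsWithin_iff] at h1
      filter_upwards [h1] with y hy
      by_cases hyK : y ∈ K
      · exact Or.inl hyK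
      · exact Or.inr (hy hyK)
  -- the truncation `((u - k)⁺)²`, extended by zero across `K`, and the factor `2 (u - k)⁺` of its
  -- derivative
  set V : E → ℝ := fun x => if x ∈ K then 0 else max (u x - k) 0 ^ 2 with hV
  set W : E → ℝ := fun x => if x ∈ K then 0 else 2 * max (u x - k) 0 with hW
  have hV0 : ∀ x ∈ K, V =ᶠ[𝓝 x] fun _ => 0 := by
    intro x hx
    filter_upwards [hnear x hx] with y hy
    rcases hy with hy | hy
    · simp [hV, hy]
    · simp [hV, max_eq_right (sub_nonpos.2 hy.le)]
  have hW0 : ∀ x ∈ K, W =ᶠ[𝓝 x] fun _ => 0 := by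
    intro x hx
    filter_upwards [hnear x hx] with y hy
    rcases hy with hy | hy
    · simp [hW, hy]
    · simp [hW, max_eq_right (sub_nonpos.2 hy.le)]
  have huat : ∀ x ∈ Kᶜ, ContDiffAt ℝ 1 u x := fun x hx => hu.contDiffAt (hΩ.mem_nhds hx)
  have hfu : ContinuousOn (fderiv ℝ u) Kᶜ := hu.continuousOn_fderiv_of_isOpen hΩ le_rfl
  set G : E → E := gradient u with hG
  have hGc : ContinuousOn G Kᶜ :=
    (InnerProductSpace.toDual ℝ E).symm.continuous.comp_continuousOn hfu
  have hWc : ContinuousOn W Kᶜ := by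
    have h1 : ContinuousOn (fun x => 2 * max (u x - k) 0) Kᶜ :=
      continuousOn_const.mul ((hu.continuousOn.sub continuousOn_const).sup continuousOn_const)
    exact h1.congr fun x hx => by simp [hW, show x ∉ K from hx]
  have hVd : ∀ x, HasFDerivAt V (W x • fderiv ℝ u x) x := by
    intro x
    by_cases hx : x ∈ K
    · rw [(hW0 x hx).eq_of_nhds, zero_smul]
      exact (hasFDerivAt_const (0 : ℝ) x).congr_of_eventuallyEq (hV0 x hx)
    · have h1 := (((huat x hx).differentiableAt one_ne_zero).hasFDerivAt.sub_const k)
      have h2 := (hasDerivAt_max_sq (u x - k)).comp_hasFDerivAt x h1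
      have h3 : V =ᶠ[𝓝 x] fun y => max (u y - k) 0 ^ 2 := by
        filter_upwards [hΩ.mem_nhds hx] with y hy
        simp [hV, show y ∉ K from hy]
      have h4 : W x = 2 * max (u x - k) 0 := by simp [hW, hx]
      rw [h4]
      exact h2.congr_of_eventuallyEq h3
  have hDVc : Continuous fun x => W x • fderiv ℝ u x := by
    rw [continuous_iff_continuousAt]
    intro x
    by_cases hx : x ∈ K
    · have h1 : (fun x => W x • fderiv ℝ u x) =ᶠ[𝓝 x] fun _ => 0 := by
        filter_upwards [hW0 x hx] with y hy
        rw [hy, zero_smul]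
      exact continuousAt_const.congr h1.symm
    · exact (hWc.smul hfu).continuousAt (hΩ.mem_nhds hx)
  have hVC1 : ContDiff ℝ 1 V := contDiff_one_iff_hasFDerivAt.2 ⟨_, hDVc, hVd⟩
  have hVs : tsupport V ⊆ Kᶜ := by
    intro x hx hxK
    exact (notMem_tsupport_iff_eventuallyEq.2 (hV0 x hxK)) hx
  set X : E → E := fun x => (‖G x‖ ^ (p - 2) * A ‖G x‖) • G x with hX
  have hXc : ContinuousOn X Kᶜ := by
    refine ContinuousOn.smul (ContinuousOn.mul ?_ ?_) hGc
    · exact hGc.norm.rpow_const fun _ _ => Or.inr (by linarith)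
    · exact hA_cont.comp hGc.norm fun x _ => norm_nonneg (G x)
  have hGG : ∀ x, fderiv ℝ u x (G x) = ‖G x‖ ^ 2 := by
    intro x
    rw [← inner_gradient_left, ← real_inner_self_eq_norm_sq]
  -- a gradient that vanishes everywhere makes `V` constant on the connected space `E`, hence equal
  -- to its value `0` on the nonempty set `K`
  suffices hzero : ∀ x, W x • fderiv ℝ u x = 0 by
    obtain ⟨z, hz⟩ := hKne
    intro x hx
    have h1 : V x = V z := is_const_of_fderiv_eq_zero (𝕜 := ℝ) (hVC1.differentiable one_ne_zero)
      (fun y => by rw [(hVd y).fderiv, hzero y]) x z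
    rw [(hV0 z hz).eq_of_nhds] at h1
    have h2 : max (u x - k) 0 ^ 2 = 0 := by simpa [hV, show x ∉ K from hx] using h1
    have h3 := pow_eq_zero_iff two_ne_zero |>.1 h2
    linarith [le_max_left (u x - k) 0]
  by_contra! hne
  obtain ⟨x₁, hx₁⟩ := hne
  have hW1 : W x₁ ≠ 0 := left_ne_zero_of_smul hx₁
  have hx₁K : x₁ ∈ Kᶜ := fun h => hW1 (hW0 x₁ h).eq_of_nhds
  have hWnn : ∀ x, 0 ≤ W x := by
    intro x
    by_cases hx : x ∈ K
    · simp [hW, hx]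
    · simp [hW, hx]
  have hG1 : G x₁ ≠ 0 := by
    intro h
    have h2 : fderiv ℝ u x₁ = 0 := by
      rw [← toDual_gradient]
      change InnerProductSpace.toDual ℝ E (G x₁) = 0
      rw [h, map_zero]
    exact right_ne_zero_of_smul hx₁ h2
  -- otherwise the energy density `q` is bounded below by some `c > 0` on a ball around `x₁`
  set q : E → ℝ := fun x => W x * ‖G x‖ ^ p with hq
  have hqc : ContinuousOn q Kᶜ := hWc.mul (hGc.norm.rpow_const fun _ _ => Or.inr hp0.le)
  have hq1 : 0 < q x₁ := mul_pos (lt_of_le_of_ne (hWnn x₁) hW1.symm)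
    (Real.rpow_pos_of_pos (norm_pos_iff.2 hG1) _)
  set c := q x₁ / 2 with hc
  have hc0 : 0 < c := half_pos hq1
  have hev : ∀ᶠ x in 𝓝 x₁, x ∈ Kᶜ ∧ c ≤ q x :=
    (hΩ.eventually_mem hx₁K).and
      ((hqc.continuousAt (hΩ.mem_nhds hx₁K)).eventually_const_le (half_lt_self hq1))
  obtain ⟨ρ, hρ, hball⟩ := Metric.eventually_nhds_iff_ball.1 hev
  set B := Metric.ball x₁ ρ with hB
  have hBvol : 0 < volume.real B :=
    ENNReal.toReal_pos (Metric.measure_ball_pos volume x₁ hρ).ne' measure_ball_lt_top.ne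
  set N := M + |k| with hN
  have hN0 : 0 ≤ N := add_nonneg ((abs_nonneg _).trans (hM x₁ hx₁K)) (abs_nonneg k)
  set C := 2 * N * (1 / (δ / 2)) ^ (p - 1) * (p * N * L) ^ p with hC
  have hL0 : 0 ≤ L := by linarith [(hA_bound 0 le_rfl).1, (hA_bound 0 le_rfl).2]
  have hC0 : 0 ≤ C := by positivity
  -- the Caccioppoli estimate, tested with `η ^ p * V`
  have key : ∀ η : E → ℝ, ContDiff ℝ 1 η → HasCompactSupport η → (∀ x, 0 ≤ η x) →
      (∀ x ∈ B, η x = 1) →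
      δ / 2 * c * volume.real B ≤ C * ∫ x, ‖fderiv ℝ η x‖ ^ p := by
    intro η hη hηc hη0 hη1
    have hηp : ContDiff ℝ 1 fun x => η x ^ p :=
      hη.rpow_const_of_le (m := 1) (by norm_num; linarith)
    have hψ : ContDiff ℝ 1 fun x => η x ^ p * V x := hηp.mul hVC1
    have hηpc : HasCompactSupport fun x => η x ^ p :=
      hηc.comp_left (g := fun t : ℝ => t ^ p) (Real.zero_rpow hp0.ne')
    have hψc : HasCompactSupport fun x => η x ^ p * V x := hηpc.mul_right
    have hψs : tsupport (fun x => η x ^ p * V x) ⊆ Kᶜ := (tsupport_mul_subset_right).trans hVs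
    have hzero := weak_of_contDiff_one hΩ hXc hw hψ hψc hψs
    have hψd : ∀ x, fderiv ℝ (fun x => η x ^ p * V x) x (X x) =
        η x ^ p * (W x * (‖G x‖ ^ (p - 2) * A ‖G x‖ * ‖G x‖ ^ 2)) +
        V x * (p * η x ^ (p - 1) * (‖G x‖ ^ (p - 2) * A ‖G x‖ * fderiv ℝ η x (G x))) := by
      intro x
      have h1 := ((hη.differentiable one_ne_zero x).hasFDerivAt.rpow_const
        (p := p) (Or.inr (by linarith))).mul (hVd x)
      have h2 : HasFDerivAt (fun x => η x ^ p * V x) _ x := h1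
      rw [h2.fderiv]
      simp only [hX, add_apply, smul_apply, map_smul, smul_eq_mul, hGG]
      ring
    have hFint : IntegrableOn (fun x => fderiv ℝ (fun x => η x ^ p * V x) x (X x)) Kᶜ := by
      have h1 : IntegrableOn (fun x => fderiv ℝ (fun x => η x ^ p * V x) x (X x))
          (tsupport fun x => η x ^ p * V x) :=
        ContinuousOn.integrableOn_compact hψc
          ((hψ.continuous_fderiv one_ne_zero).continuousOn.clm_apply (hXc.mono hψs))
      refine h1.of_forall_sdiff_eq_zero hΩ.measurableSet fun x hx => ?_
      have : fderiv ℝ (fun x => η x ^ p * V x) x = 0 := by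
        by_contra h
        exact hx.2 (support_fderiv_subset ℝ h)
      rw [this, zero_apply]
    have hDη : Integrable fun x => C * ‖fderiv ℝ η x‖ ^ p := by
      refine Integrable.const_mul (Continuous.integrable_of_hasCompactSupport ?_ ?_) C
      · exact (hη.continuous_fderiv one_ne_zero).norm.rpow_const fun _ => Or.inr hp0.le
      · exact (hηc.fderiv ℝ).comp_left (g := fun T : E →L[ℝ] ℝ => ‖T‖ ^ p)
          (by simp [Real.zero_rpow hp0.ne'])
    have hpt : ∀ x ∈ Kᶜ, δ / 2 * (W x * (η x ^ p * ‖G x‖ ^ p)) ≤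
        fderiv ℝ (fun x => η x ^ p * V x) x (X x) + C * ‖fderiv ℝ η x‖ ^ p := by
      intro x hx
      have hxK : x ∉ K := hx
      have hm : max (u x - k) 0 ≤ N := by
        refine max_le ?_ hN0
        linarith [le_abs_self (u x), hM x hx, neg_abs_le k]
      have hm0 : 0 ≤ max (u x - k) 0 := le_max_right _ _
      have hWx : W x = 2 * max (u x - k) 0 := by simp [hW, hxK]
      have hVx : V x = max (u x - k) 0 ^ 2 := by simp [hV, hxK]
      rw [hψd x]
      refine caccioppoli_pointwise hp2 hδ hN0 (norm_nonneg _) (hη0 x) (norm_nonneg _) (hWnn x)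
        (by rw [hWx]; linarith) (by rw [hVx]; positivity) (by rw [hWx, hVx]; nlinarith)
        (hA_bound _ (norm_nonneg _)).1 (hA_bound _ (norm_nonneg _)).2 ?_
      exact ContinuousLinearMap.le_opNorm (fderiv ℝ η x) (G x)
    have hBK : B ⊆ Kᶜ := fun x hx => (hball x hx).1
    have hsum := hFint.add hDη.integrableOn
    calc δ / 2 * c * volume.real B
        = ∫ x in B, δ / 2 * c := by
          rw [setIntegral_const, smul_eq_mul, mul_comm]
      _ ≤ ∫ x in B, (fderiv ℝ (fun x => η x ^ p * V x) x (X x) + C * ‖fderiv ℝ η x‖ ^ p) := by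
          refine setIntegral_mono_on (integrableOn_const measure_ball_lt_top.ne)
            (hsum.mono_set hBK) measurableSet_ball fun x hx => ?_
          refine le_trans ?_ (hpt x (hBK hx))
          rw [hη1 x hx, Real.one_rpow, one_mul]
          exact mul_le_mul_of_nonneg_left (hball x hx).2 (by positivity)
      _ ≤ ∫ x in Kᶜ, (fderiv ℝ (fun x => η x ^ p * V x) x (X x) + C * ‖fderiv ℝ η x‖ ^ p) := by
          refine setIntegral_mono_set hsum ?_ hBK.eventuallyLE
          refine (ae_restrict_iff' hΩ.measurableSet).2 (Eventually.of_forall fun x hx => ?_)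
          refine le_trans ?_ (hpt x hx)
          have := hWnn x
          have := hη0 x
          simp only [Pi.zero_apply]
          positivity
      _ = ∫ x in Kᶜ, C * ‖fderiv ℝ η x‖ ^ p := by
          rw [integral_add hFint hDη.integrableOn, hzero, zero_add]
      _ ≤ ∫ x, C * ‖fderiv ℝ η x‖ ^ p :=
          setIntegral_le_integral hDη (Eventually.of_forall fun x => by
            simp only [Pi.zero_apply]; positivity)
      _ = C * ∫ x, ‖fderiv ℝ η x‖ ^ p := integral_const_mul _ _
  -- a cutoff of small energy equal to `1` on `B` contradicts the estimate
  have hpos : 0 < δ / 2 * c * volume.real B := by positivity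
  obtain ⟨η, hη, hηc, hη0, hη1, hηε⟩ := exists_cutoff (E := E) (p := p) (by linarith) hp
    (‖x₁‖ + ρ) (ε := δ / 2 * c * volume.real B / (2 * (C + 1))) (by positivity)
  have h1 := key η hη hηc hη0 fun x hx => hη1 x (by
    rw [mem_closedBall_zero_iff]
    have h2 : ‖x - x₁‖ < ρ := mem_ball_iff_norm.1 hx
    linarith [norm_le_norm_add_norm_sub x₁ x, norm_sub_rev x x₁])
  have h2 := mul_le_mul_of_nonneg_left hηε hC0
  have h3 : C * (δ / 2 * c * volume.real B / (2 * (C + 1))) ≤ δ / 2 * c * volume.real B / 2 := by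
    rw [mul_div_assoc', div_le_div_iff₀ (by positivity) (by positivity)]
    nlinarith
  linarith

end

/-- a bounded `C¹` weak solution of
`div(|∇u|^{p-2} A(|∇u|) ∇u) = 0` in `ℝⁿ \ K` (with `p ≥ n`) satisfies
`I ≤ u ≤ S`, where `S` (resp. `I`) is the sup (resp. inf) over `x₀ ∈ ∂K`
of the limsup (resp. liminf) of `u` at `x₀` from within `ℝⁿ \ K`. -/
theorem stmt_8 (n : ℕ) (hn : 2 ≤ n) (p : ℝ) (hp : (n : ℝ) ≤ p)
    (K : Set (EuclideanSpace ℝ (Fin n))) (hK : IsCompact K) (hKne : K.Nonempty)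
    (A : ℝ → ℝ) (hA_cont : ContinuousOn A (Ici 0)) (hA0 : 0 < A 0)
    (hφ_mono : StrictMonoOn (fun t => t ^ (p - 1) * A t) (Ioi 0))
    (L δ : ℝ) (hδ : 0 < δ) (hδL : δ ≤ L)
    (hA_bound : ∀ t ≥ (0 : ℝ), δ ≤ A t ∧ A t ≤ L)
    (u : EuclideanSpace ℝ (Fin n) → ℝ)
    (hu_C1 : ContDiffOn ℝ 1 u Kᶜ)
    (hu_bdd : ∃ M, ∀ x ∈ Kᶜ, |u x| ≤ M)
    (hu_weak : ∀ ψ : EuclideanSpace ℝ (Fin n) → ℝ,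
      ContDiff ℝ (⊤ : ℕ∞) ψ → HasCompactSupport ψ → tsupport ψ ⊆ Kᶜ →
      ∫ x in Kᶜ, ‖gradient u x‖ ^ (p - 2) * A ‖gradient u x‖ *
        ⟪gradient u x, gradient ψ x⟫ = 0) :
    ∀ x ∈ Kᶜ,
      sInf ((fun x₀ => liminf u (𝓝[Kᶜ] x₀)) '' frontier K) ≤ u x ∧
      u x ≤ sSup ((fun x₀ => limsup u (𝓝[Kᶜ] x₀)) '' frontier K) := by
  obtain ⟨M, hM⟩ := hu_bdd
  have hp2 : (2 : ℝ) ≤ p := le_trans (by exact_mod_cast hn) hp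
  have hfin : (Module.finrank ℝ (EuclideanSpace ℝ (Fin n)) : ℝ) ≤ p := by simpa using hp
  have hne : ∀ x₀ ∈ frontier K, (𝓝[Kᶜ] x₀).NeBot := by
    intro x₀ hx₀
    rw [frontier_eq_closure_inter_closure] at hx₀
    exact mem_closure_iff_nhdsWithin_neBot.1 hx₀.2
  have hub : ∀ x₀, ∀ᶠ x in 𝓝[Kᶜ] x₀, u x ≤ M := fun x₀ =>
    eventually_mem_nhdsWithin.mono fun x hx => (le_abs_self _).trans (hM x hx)
  have hlb : ∀ x₀, ∀ᶠ x in 𝓝[Kᶜ] x₀, -M ≤ u x := fun x₀ =>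
    eventually_mem_nhdsWithin.mono fun x hx => neg_le_of_abs_le (hM x hx)
  have hwk : ∀ ψ : EuclideanSpace ℝ (Fin n) → ℝ,
      ContDiff ℝ (⊤ : ℕ∞) ψ → HasCompactSupport ψ → tsupport ψ ⊆ Kᶜ →
      ∫ x in Kᶜ, fderiv ℝ ψ x
        ((‖gradient u x‖ ^ (p - 2) * A ‖gradient u x‖) • gradient u x) = 0 := by
    intro ψ h1 h2 h3
    rw [← hu_weak ψ h1 h2 h3]
    congr 1 with x
    rw [map_smul, smul_eq_mul, inner_gradient_right]
    simp
  have hgrad : ∀ x, gradient (fun y => -u y) x = -gradient u x := by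
    intro x
    simp [gradient]
  have hwk' : ∀ ψ : EuclideanSpace ℝ (Fin n) → ℝ,
      ContDiff ℝ (⊤ : ℕ∞) ψ → HasCompactSupport ψ → tsupport ψ ⊆ Kᶜ →
      ∫ x in Kᶜ, fderiv ℝ ψ x ((‖gradient (fun y => -u y) x‖ ^ (p - 2) *
        A ‖gradient (fun y => -u y) x‖) • gradient (fun y => -u y) x) = 0 := by
    intro ψ h1 h2 h3
    simp only [hgrad, norm_neg, smul_neg, map_neg, integral_neg, hwk ψ h1 h2 h3, neg_zero]
  intro x hx
  constructor
  · refine le_of_forall_lt_imp_le_of_dense fun k hk => ?_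
    have hbdd : BddBelow ((fun x₀ => liminf u (𝓝[Kᶜ] x₀)) '' frontier K) := by
      refine ⟨-M, ?_⟩
      rintro _ ⟨x₀, hx₀, rfl⟩
      have := hne x₀ hx₀
      exact le_liminf_of_le (isCoboundedUnder_ge_of_eventually_le _ (hub x₀)) (hlb x₀)
    have h := le_of_eventually_lt (k := -k) hp2 hfin hδ hK.isClosed hKne hA_cont hA_bound hu_C1.neg
      (fun x hx => by rw [abs_neg]; exact hM x hx) hwk' (fun x₀ hx₀ => by
        have h1 : k < liminf u (𝓝[Kᶜ] x₀) := hk.trans_le (csInf_le hbdd ⟨x₀, hx₀, rfl⟩)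
        exact (eventually_lt_of_lt_liminf h1 (isBoundedUnder_of_eventually_ge (hlb x₀))).mono
          fun y hy => neg_lt_neg hy) x hx
    exact neg_le_neg_iff.1 h
  · refine le_of_forall_gt_imp_ge_of_dense fun k hk => ?_
    have hbdd : BddAbove ((fun x₀ => limsup u (𝓝[Kᶜ] x₀)) '' frontier K) := by
      refine ⟨M, ?_⟩
      rintro _ ⟨x₀, hx₀, rfl⟩
      have := hne x₀ hx₀
      exact limsup_le_of_le (isCoboundedUnder_le_of_eventually_le _ (hlb x₀)) (hub x₀)
    exact le_of_eventually_lt hp2 hfin hδ hK.isClosed hKne hA_cont hA_bound hu_C1 hM hwk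
      (fun x₀ hx₀ => by
        have h1 : limsup u (𝓝[Kᶜ] x₀) < k := (le_csSup hbdd ⟨x₀, hx₀, rfl⟩).trans_lt hk
        exact eventually_lt_of_limsup_lt h1 (isBoundedUnder_of_eventually_le (hub x₀))) x hx
end

section
/- Let n ≥ 2 be an integer and p > n a real number, and define u : ℝⁿ → ℝ by u(x) = |x|^{(p−n)/(p−1)}. Then u is continuous on ℝⁿ, continuously differentiable on ℝⁿ\{0}, bounded from below (u ≥ 0) with u(0) = 0, not constant, and u is a weak solution of the p-Laplace equation div(|∇u|^{p-2}∇u) = 0 in ℝⁿ\{0}: for every smooth function ψ : ℝⁿ → ℝ with compact support contained in ℝⁿ\{0}, ∫ |∇u(x)|^{p-2} ⟨∇u(x), ∇ψ(x)⟩ dx = 0. -/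
/-!
Write `α = (p - n) / (p - 1)`. Away from the origin `∇u(x) = α |x|^(α-2) x`, so
`|∇u|^(p-2) ∇u = α^(p-1) |x|^((α-1)(p-1)-1) x = α^(p-1) |x|^(-n) x`, because `(α-1)(p-1) = 1 - n`.
The weak equation therefore says that the integral of `|x|^(-n) ⟨x, ∇ψ(x)⟩` vanishes. In polar
coordinates `x = rω` the Jacobian `r^(n-1)` cancels the weight and leaves, on each ray, the integral
of `d/dr ψ(rω)` over `r > 0`, which is `-ψ(0) = 0`
(`setIntegral_norm_rpow_neg_finrank_mul_fderiv_apply_self`).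
-/

open Real MeasureTheory Set
open scoped RealInnerProductSpace

section Radial

variable {E : Type*} [NormedAddCommGroup E] [InnerProductSpace ℝ E]

theorem hasGradientAt_norm_rpow [CompleteSpace E] (a : ℝ) {x : E} (hx : x ≠ 0) :
    HasGradientAt (fun y : E => ‖y‖ ^ a) ((a * ‖x‖ ^ (a - 2)) • x) x := by
  have hx' : 0 < ‖x‖ := norm_pos_iff.2 hx
  have h1 := (hasStrictFDerivAt_norm_sq x).hasFDerivAt.rpow_const (p := a / 2)
    (Or.inl (by positivity))
  have h2 : (fun y : E => (‖y‖ ^ 2) ^ (a / 2)) = fun y => ‖y‖ ^ a := by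
    funext y
    rw [← Real.rpow_natCast, ← Real.rpow_mul (norm_nonneg y)]
    congr 1
    push_cast
    ring
  have h3 : (‖x‖ ^ 2) ^ (a / 2 - 1) = ‖x‖ ^ (a - 2) := by
    rw [← Real.rpow_natCast, ← Real.rpow_mul hx'.le]
    congr 1
    push_cast
    ring
  rw [h2, h3] at h1
  rw [hasGradientAt_iff_hasFDerivAt]
  refine h1.congr_fderiv ?_
  ext y
  simp
  ring

/-- The flux of `x ↦ ‖x‖ ^ a` for the `p`-Laplacian is again a power of the norm times `x`. -/
theorem norm_rpow_flux [CompleteSpace E] {a : ℝ} (ha : 0 < a) (p : ℝ) {x : E} (hx : x ≠ 0) :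
    ‖(a * ‖x‖ ^ (a - 2)) • x‖ ^ (p - 2) * (a * ‖x‖ ^ (a - 2)) =
      a ^ (p - 1) * ‖x‖ ^ ((a - 1) * (p - 1) - 1) := by
  have hx' : 0 < ‖x‖ := norm_pos_iff.2 hx
  have h1 : ‖(a * ‖x‖ ^ (a - 2)) • x‖ = a * ‖x‖ ^ (a - 1) := by
    rw [norm_smul, Real.norm_of_nonneg (by positivity), mul_assoc,
      ← Real.rpow_add_one hx'.ne']
    congr 2
    ring
  rw [h1, Real.mul_rpow ha.le (by positivity), ← Real.rpow_mul hx'.le]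
  have h2 : a ^ (p - 1) = a ^ (p - 2) * a := by
    rw [← Real.rpow_add_one ha.ne']
    congr 1
    ring
  have h3 : ‖x‖ ^ ((a - 1) * (p - 1) - 1) = ‖x‖ ^ ((a - 1) * (p - 2)) * ‖x‖ ^ (a - 2) := by
    rw [← Real.rpow_add hx']
    congr 1
    ring
  rw [h2, h3]
  ring

theorem integral_Ioi_fderiv_smul_apply {ψ : E → ℝ} (hψ : ContDiff ℝ 1 ψ)
    (hc : HasCompactSupport ψ) {v : E} (hv : v ≠ 0) :
    ∫ r in Ioi (0 : ℝ), fderiv ℝ ψ (r • v) v = -ψ 0 := by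
  have hd : ∀ r : ℝ, HasDerivAt (fun r : ℝ => ψ (r • v)) (fderiv ℝ ψ (r • v) v) r := by
    intro r
    have h1 : HasDerivAt (fun r : ℝ => r • v) v r := by
      simpa using (hasDerivAt_id r).smul_const v
    exact ((hψ.differentiable one_ne_zero _).hasFDerivAt).comp_hasDerivAt r h1
  have hcs : HasCompactSupport (fun r : ℝ => ψ (r • v)) :=
    hc.comp_isClosedEmbedding (isClosedEmbedding_smul_left hv)
  have hcd : ContDiff ℝ 1 (fun r : ℝ => ψ (r • v)) :=
    hψ.comp (contDiff_id.smul contDiff_const)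
  have h := hcs.integral_Ioi_deriv_eq hcd 0
  simpa only [(hd _).deriv, zero_smul] using h

/-- The weak form of `div (‖x‖ ^ (-dim E) • x) = 0` away from the origin. -/
theorem setIntegral_norm_rpow_neg_finrank_mul_fderiv_apply_self
    [FiniteDimensional ℝ E] [MeasurableSpace E] [BorelSpace E] [Nontrivial E]
    (μ : Measure E) [μ.IsAddHaarMeasure] {ψ : E → ℝ} (hψ : ContDiff ℝ 1 ψ)
    (hc : HasCompactSupport ψ) (h0 : ψ 0 = 0) :
    ∫ x in ({0}ᶜ : Set E), ‖x‖ ^ (-(Module.finrank ℝ E : ℝ)) * fderiv ℝ ψ x x ∂μ = 0 := by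
  set d := Module.finrank ℝ E with hd
  have hdpos : 0 < d := Module.finrank_pos
  set F : E → ℝ := fun x => ‖x‖ ^ (-(d : ℝ)) * fderiv ℝ ψ x x with hF
  set G : Metric.sphere (0 : E) 1 × Ioi (0 : ℝ) → ℝ := fun z => F (z.2.1 • z.1.1) with hG
  have hpolar : ∫ x in ({0}ᶜ : Set E), F x ∂μ =
      ∫ z, G z ∂(μ.toSphere.prod (Measure.volumeIoiPow (d - 1))) := by
    rw [← integral_subtype_comap (measurableSet_singleton _).compl F,
      ← μ.measurePreserving_homeomorphUnitSphereProd.integral_comp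
        (Homeomorph.measurableEmbedding _) G]
    refine integral_congr_ae (Filter.Eventually.of_forall fun x => ?_)
    have hx : ‖x.1‖ ≠ 0 := norm_ne_zero_iff.2 x.2
    simp [hG, smul_smul, hx]
  rw [hpolar]
  -- If `G` were not integrable, its Bochner integral would be `0` by convention.
  by_cases hint : Integrable G (μ.toSphere.prod (Measure.volumeIoiPow (d - 1)))
  swap
  · exact integral_undef hint
  rw [integral_prod _ hint]
  refine integral_eq_zero_of_ae (Filter.Eventually.of_forall fun ω => ?_)
  have hω : ‖ω.1‖ = 1 := by simp
  have hω0 : ω.1 ≠ 0 := by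
    intro h
    simp [h] at hω
  change ∫ r, F (r.1 • ω.1) ∂(Measure.volumeIoiPow (d - 1)) = 0
  -- The Jacobian `r ^ (d - 1)` cancels the weight, leaving the derivative along the ray.
  have hray : ∀ r : Ioi (0 : ℝ), (r.1 ^ (d - 1)) * F (r.1 • ω.1) =
      fderiv ℝ ψ (r.1 • ω.1) ω.1 := by
    intro r
    have hr : 0 < r.1 := r.2
    have h1 : r.1 ^ (d - 1) * (r.1 ^ (-(d : ℝ)) * r.1) = 1 := by
      rw [Real.rpow_neg hr.le, Real.rpow_natCast, mul_left_comm, ← pow_succ,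
        Nat.sub_add_cancel hdpos]
      exact inv_mul_cancel₀ (pow_pos hr d).ne'
    simp only [hF, norm_smul, hω, mul_one, Real.norm_of_nonneg hr.le, map_smul, smul_eq_mul]
    linear_combination (fderiv ℝ ψ (r.1 • ω.1) ω.1) * h1
  calc ∫ r, F (r.1 • ω.1) ∂(Measure.volumeIoiPow (d - 1))
      = ∫ r : Ioi (0 : ℝ), fderiv ℝ ψ (r.1 • ω.1) ω.1 ∂(Measure.comap Subtype.val volume) := by
        simp only [Measure.volumeIoiPow, ENNReal.ofReal]
        rw [integral_withDensity_eq_integral_smul]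
        · refine integral_congr_ae (Filter.Eventually.of_forall fun r => ?_)
          have hr : 0 < r.1 := r.2
          simp only [NNReal.smul_def, Real.coe_toNNReal _ (pow_pos hr _).le, smul_eq_mul]
          exact hray r
        · exact (measurable_subtype_coe.pow_const _).real_toNNReal
    _ = ∫ r in Ioi (0 : ℝ), fderiv ℝ ψ (r • ω.1) ω.1 :=
        integral_subtype_comap measurableSet_Ioi fun r => fderiv ℝ ψ (r • ω.1) ω.1
    _ = 0 := by rw [integral_Ioi_fderiv_smul_apply hψ hc hω0, h0, neg_zero]

end Radial

/-- for `p > n`, `u(x) = |x|^{(p-n)/(p-1)}` is a continuous,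
`C¹` off the origin, nonnegative, nonconstant weak solution of the
`p`-Laplace equation in `ℝⁿ \ {0}`. -/
theorem stmt_12 (n : ℕ) (hn : 2 ≤ n) (p : ℝ) (hp : (n : ℝ) < p)
    (u : EuclideanSpace ℝ (Fin n) → ℝ)
    (hu : ∀ x, u x = ‖x‖ ^ ((p - n) / (p - 1))) :
    Continuous u ∧
    ContDiffOn ℝ 1 u ({0}ᶜ : Set (EuclideanSpace ℝ (Fin n))) ∧
    (∀ x, 0 ≤ u x) ∧ u 0 = 0 ∧
    (∃ x y : EuclideanSpace ℝ (Fin n), u x ≠ u y) ∧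
    (∀ ψ : EuclideanSpace ℝ (Fin n) → ℝ, ContDiff ℝ (⊤ : ℕ∞) ψ → HasCompactSupport ψ →
      tsupport ψ ⊆ ({0}ᶜ : Set (EuclideanSpace ℝ (Fin n))) →
      ∫ x in ({0}ᶜ : Set (EuclideanSpace ℝ (Fin n))),
        ‖gradient u x‖ ^ (p - 2) * ⟪gradient u x, gradient ψ x⟫ = 0) := by
  have hn' : (2 : ℝ) ≤ n := by exact_mod_cast hn
  have hp1 : 0 < p - 1 := by linarith
  set a : ℝ := (p - n) / (p - 1) with ha
  have hapos : 0 < a := div_pos (by linarith) hp1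
  obtain rfl : u = fun x => ‖x‖ ^ a := funext hu
  have hnt : Nontrivial (EuclideanSpace ℝ (Fin n)) :=
    Module.nontrivial_of_finrank_pos (R := ℝ) (by simp; omega)
  refine ⟨continuous_norm.rpow_const fun _ => Or.inr hapos.le, ?_, fun x => by positivity,
    by simp [Real.zero_rpow hapos.ne'], ?_, ?_⟩
  · intro x hx
    exact ((contDiffAt_norm ℝ hx).rpow_const_of_ne (norm_ne_zero_iff.2 hx)).contDiffWithinAt
  · obtain ⟨x, hx⟩ := exists_ne (0 : EuclideanSpace ℝ (Fin n))
    refine ⟨x, 0, ?_⟩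
    have : 0 < ‖x‖ := norm_pos_iff.2 hx
    simpa [Real.zero_rpow hapos.ne'] using (Real.rpow_pos_of_pos this a).ne'
  · intro ψ hψ hc hsupp
    have hψ1 : ContDiff ℝ 1 ψ := hψ.of_le (by exact_mod_cast le_top)
    have h0 : ψ 0 = 0 := image_eq_zero_of_notMem_tsupport fun h => hsupp h rfl
    have hexp : (a - 1) * (p - 1) - 1 = -(n : ℝ) := by
      rw [ha]
      field_simp
      ring
    have key : ∀ x ∈ ({0}ᶜ : Set (EuclideanSpace ℝ (Fin n))),
        ‖gradient (fun x : EuclideanSpace ℝ (Fin n) => ‖x‖ ^ a) x‖ ^ (p - 2) *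
          ⟪gradient (fun x : EuclideanSpace ℝ (Fin n) => ‖x‖ ^ a) x, gradient ψ x⟫ =
        a ^ (p - 1) * (‖x‖ ^ (-(n : ℝ)) * fderiv ℝ ψ x x) := by
      intro x hx
      have hflux := norm_rpow_flux hapos p (x := x) hx
      rw [hexp] at hflux
      have hin : ⟪x, gradient ψ x⟫ = fderiv ℝ ψ x x := by
        rw [real_inner_comm, gradient, InnerProductSpace.toDual_symm_apply]
      rw [(hasGradientAt_norm_rpow a hx).gradient, real_inner_smul_left, hin, ← mul_assoc, hflux,
        mul_assoc]
    rw [setIntegral_congr_fun (measurableSet_singleton _).compl key, integral_const_mul]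
    have h := setIntegral_norm_rpow_neg_finrank_mul_fderiv_apply_self
      (volume : Measure (EuclideanSpace ℝ (Fin n))) hψ1 hc h0
    rw [finrank_euclideanSpace_fin] at h
    rw [h, mul_zero]
end
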